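/- arXiv:2404.08193 — 2 statements merged into one kernel-verified Lean document; each statement's English description precedes it below -/
import Mathlib

section
/- For every integer k ≥ 2, there exists a positive integer J such that for every integer j ≥ J, the set of positive integers that are not (j,k)-representable is finite. -/
/-- A positive integer `n` is `(j,k)`-representable if it is a sum of exactly `j`
positive `k`-th powers. -/
def IsRepr (n j k : ℕ) : Prop :=
  ∃ a : Fin j → ℕ, (∀ i, 0 < a i) ∧ ∑ i, (a i) ^ k = n

/-!
The sums of `k`-th powers are shown to be dense by Linnik's method. By induction on the degree `k`,
for `s = 6 ^ (k - 1)` and a polynomial `p` of degree `k` with `p(P) = O(P ^ k)`, the equation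
`p(x₁) + ⋯ + p(xₛ) = p(y₁) + ⋯ + p(yₛ)` has `O(P ^ (2s - k))` solutions in `[0, P]`. Squaring the
exponential sum of `p` leads to the sums over `x` of `e(h q_h(x) t)`, where
`p(x + h) - p(x) = h q_h(x)` and `q_h` has degree `k - 1`. The integral of the cube of
`∑ₕ |∑ₓ e(h q_h(x) t)| ^ (2s)` counts solutions of `h₁m₁ + h₂m₂ + h₃m₃ = 0`, where each `mᵢ` is a
difference of two sums of `s` values of `q_h` for `h = hᵢ` and, by the induction hypothesis, has few
such representations; so it is enough to count the solutions of the linear equation.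

Consequently sums of boundedly many `k`-th powers have positive Schnirelmann density, and
Schnirelmann's inequality yields an `s` such that every natural number is a sum of at most `s`
positive `k`-th powers. To prescribe the number of summands exactly, add a fixed integer `T` which
is a sum of `L + m` positive `k`-th powers for every `m ≤ s`, and then ones.
-/

open Finset

namespace Waring

section LinearEquations

variable {X Y : ℕ}

lemma card_filter_modEq_mul_le {m : ℕ} (hm : 1 ≤ m) (hmY : m ≤ Y) (v : ℤ) :
    #{y ∈ Icc (-Y : ℤ) Y | y ≡ v [ZMOD m]} * m ≤ 3 * Y := by
  have hm' : (0 : ℚ) < m := by exact_mod_cast hm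
  have hIcc : Icc (-Y : ℤ) Y = Ioc (-Y - 1 : ℤ) Y := by ext; simp only [mem_Icc, mem_Ioc]; lia
  have hcard := Int.Ioc_filter_modEq_card (-Y - 1 : ℤ) Y (r := m) (by exact_mod_cast hm) v
  rw [← hIcc] at hcard
  set t := #{y ∈ Icc (-Y : ℤ) Y | y ≡ v [ZMOD m]}
  rcases le_max_iff.1 hcard.le with h | h
  · have hle := (Int.cast_le (R := ℚ)).2 h
    rw [Int.cast_sub, Int.cast_natCast] at hle
    have hupper := Int.floor_le (((Y : ℤ) - v) / (m : ℤ) : ℚ)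
    have hlower := Int.sub_one_lt_floor (((-Y - 1 : ℤ) - v) / (m : ℤ) : ℚ)
    have hlt : (t : ℚ) < ((2 * Y + 1 + m : ℕ) : ℚ) / m := by
      calc (t : ℚ) < ((Y : ℤ) - v) / (m : ℤ) - (((-Y - 1 : ℤ) - v) / (m : ℤ) - 1) := by linarith
        _ = _ := by push_cast; field_simp; ring
    have : t * m < 2 * Y + 1 + m := by
      rw [lt_div_iff₀ hm'] at hlt
      exact_mod_cast hlt
    lia
  · have : t = 0 := by lia
    simp [this]

lemma card_filter_mul_modEq_mul_le {m : ℕ} (hm : 1 ≤ m) (hmY : m ≤ Y) (c : ℕ) (n : ℤ) :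
    #{y ∈ Icc (-Y : ℤ) Y | c * y ≡ n [ZMOD m]} * m ≤ 3 * Y * m.gcd c := by
  rcases eq_empty_or_nonempty {y ∈ Icc (-Y : ℤ) Y | c * y ≡ n [ZMOD m]} with h | ⟨v, hv⟩
  · simp [h]
  obtain ⟨e, he⟩ := Nat.gcd_dvd_left m c
  have hg : 0 < m.gcd c := Nat.gcd_pos_of_pos_left _ hm
  have he_pos : 1 ≤ e := Nat.pos_of_ne_zero (by rintro rfl; lia)
  have he_le : e ≤ Y := (Nat.le_mul_of_pos_left e hg).trans (he.symm.le.trans hmY)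
  have hdiv : (m : ℤ) / Int.gcd m c = e := by
    rw [Int.gcd_natCast_natCast, ← Int.natCast_ediv, Nat.div_eq_of_eq_mul_right hg he]
  have hsub : {y ∈ Icc (-Y : ℤ) Y | c * y ≡ n [ZMOD m]} ⊆ {y ∈ Icc (-Y : ℤ) Y | y ≡ v [ZMOD e]} :=
    monotone_filter_right _ fun y _ hy => by
      rw [← hdiv]
      exact Int.ModEq.cancel_left_div_gcd (by exact_mod_cast hm)
        (hy.trans (mem_filter.1 hv).2.symm)
  calc _ ≤ #{y ∈ Icc (-Y : ℤ) Y | y ≡ v [ZMOD e]} * m := by gcongr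
    _ = #{y ∈ Icc (-Y : ℤ) Y | y ≡ v [ZMOD e]} * e * m.gcd c := by
      nth_rewrite 1 [he]; ring
    _ ≤ _ := Nat.mul_le_mul_right _ (card_filter_modEq_mul_le he_pos he_le v)

lemma card_linear_two_mul_left_le {a : ℕ} (ha : 1 ≤ a) (haY : a ≤ Y) (b : ℕ) (n : ℤ) :
    #{y ∈ Icc (-Y : ℤ) Y ×ˢ Icc (-Y : ℤ) Y | a * y.1 + b * y.2 = n} * a ≤ 3 * Y * a.gcd b := by
  refine le_trans (Nat.mul_le_mul_right _ ?_) (card_filter_mul_modEq_mul_le ha haY b n)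
  refine card_le_card_of_injOn Prod.snd ?_ ?_
  · rintro ⟨y, z⟩ h
    simp only [coe_filter, mem_product, Set.mem_ofPred_eq] at h ⊢
    exact ⟨h.1.2, (Int.modEq_iff_dvd).2 ⟨y, by linarith⟩⟩
  · rintro ⟨y, z⟩ h ⟨y', z'⟩ h' (rfl : z = z')
    simp only [coe_filter, Set.mem_ofPred_eq] at h h'
    have hy : (a : ℤ) * y = a * y' := by linarith
    rw [mul_left_cancel₀ (by lia) hy]

lemma card_linear_two_mul_max_le {a b : ℕ} (ha : 1 ≤ a) (haY : a ≤ Y) (hb : 1 ≤ b) (hbY : b ≤ Y)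
    (n : ℤ) :
    #{y ∈ Icc (-Y : ℤ) Y ×ˢ Icc (-Y : ℤ) Y | a * y.1 + b * y.2 = n} * max a b
      ≤ 3 * Y * a.gcd b := by
  rcases le_total b a with h | h
  · rw [max_eq_left h]
    exact card_linear_two_mul_left_le ha haY b n
  · rw [max_eq_right h, Nat.gcd_comm]
    refine le_trans (Nat.mul_le_mul_right _ ?_) (card_linear_two_mul_left_le hb hbY a n)
    refine card_le_card_of_injOn Prod.swap ?_ Prod.swap_injective.injOn
    intro y hy
    simp only [coe_filter, mem_product, Set.mem_ofPred_eq] at hy ⊢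
    exact ⟨hy.1.symm, by rw [← hy.2]; simp [add_comm]⟩

lemma card_linear_three_mul_max_le {a b : ℕ} (ha : 1 ≤ a) (haY : a ≤ Y) (hb : 1 ≤ b) (hbY : b ≤ Y)
    (c : ℕ) :
    #{y ∈ Icc (-Y : ℤ) Y ×ˢ Icc (-Y : ℤ) Y ×ˢ Icc (-Y : ℤ) Y |
      (a : ℤ) * y.1 + b * y.2.1 + c * y.2.2 = 0} * max a b ≤ 9 * Y ^ 2 * (a.gcd b).gcd c := by
  set I := Icc (-Y : ℤ) Y
  set g := a.gcd b
  have hmax : 0 < max a b := by lia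
  have hcard : #{y ∈ I ×ˢ I ×ˢ I | (a : ℤ) * y.1 + b * y.2.1 + c * y.2.2 = 0} ≤
      3 * Y * g / max a b * #{z ∈ I | c * z ≡ 0 [ZMOD g]} := by
    refine card_le_mul_card_image_of_maps_to (f := fun y => y.2.2) ?_ _ ?_
    · rintro ⟨x, y, z⟩ h
      simp only [mem_filter, mem_product] at h ⊢
      have ha : (g : ℤ) ∣ a := by exact_mod_cast Nat.gcd_dvd_left a b
      have hb : (g : ℤ) ∣ b := by exact_mod_cast Nat.gcd_dvd_right a b
      refine ⟨h.1.2.2, (Int.modEq_iff_dvd).2 ?_⟩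
      rw [show 0 - c * z = a * x + b * y by linarith]
      exact dvd_add (ha.mul_right _) (hb.mul_right _)
    · intro z _
      rw [Nat.le_div_iff_mul_le hmax]
      refine le_trans (Nat.mul_le_mul_right _ ?_)
        (card_linear_two_mul_max_le ha haY hb hbY (-(c * z)))
      refine card_le_card_of_injOn (fun y => (y.1, y.2.1)) ?_ ?_
      · rintro ⟨x, y, z'⟩ h
        simp only [mem_filter, mem_product, mem_coe] at h ⊢
        obtain ⟨⟨⟨hx, hy, -⟩, h0⟩, rfl⟩ := h
        exact ⟨⟨hx, hy⟩, by linarith⟩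
      · rintro ⟨x, y, z₁⟩ h ⟨x', y', z₂⟩ h' heq
        simp only [mem_filter, mem_coe, Prod.mk.injEq] at h h' heq ⊢
        exact ⟨heq.1, heq.2, h.2.trans h'.2.symm⟩
  calc _ ≤ 3 * Y * g / max a b * #{z ∈ I | c * z ≡ 0 [ZMOD g]} * max a b := by gcongr
    _ = 3 * Y * g / max a b * max a b * #{z ∈ I | c * z ≡ 0 [ZMOD g]} := by ring
    _ ≤ 3 * Y * g * #{z ∈ I | c * z ≡ 0 [ZMOD g]} :=
      Nat.mul_le_mul_right _ (Nat.div_mul_le_self _ _)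
    _ = 3 * Y * (#{z ∈ I | c * z ≡ 0 [ZMOD g]} * g) := by ring
    _ ≤ 3 * Y * (3 * Y * g.gcd c) :=
      Nat.mul_le_mul_left _ (card_filter_mul_modEq_mul_le (Nat.gcd_pos_of_pos_left _ ha)
        ((Nat.gcd_le_left b ha).trans haY) c 0)
    _ = _ := by ring

lemma sum_Icc_inv_max_le (n : ℕ) :
    ∑ z ∈ Icc 1 n ×ˢ Icc 1 n, ((max z.1 z.2 : ℕ) : ℝ)⁻¹ ≤ 2 * n := by
  rw [sum_product]
  induction n with
  | zero => simp
  | succ n ih =>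
    have hcorner : ∑ a ∈ Icc 1 n, ((max a (n + 1) : ℕ) : ℝ)⁻¹ = n / (n + 1) := by
      rw [sum_congr rfl fun a ha => by
        rw [max_eq_right ((mem_Icc.1 ha).2.trans n.le_succ)]]
      simp [div_eq_mul_inv]
    have hcorner' : ∑ a ∈ Icc 1 n, ((max (n + 1) a : ℕ) : ℝ)⁻¹ = n / (n + 1) := by
      simpa only [max_comm] using hcorner
    have hlast : (n / (n + 1) + (n / (n + 1) + (n + 1 : ℝ)⁻¹) : ℝ) ≤ 2 := by
      field_simp
      linarith
    simp only [sum_Icc_succ_top (Nat.le_add_left 1 n), sum_add_distrib, hcorner, hcorner', max_self]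
    push_cast at ih ⊢
    linarith

lemma sum_Icc_gcd_eq_div_max_le (X : ℕ) {d : ℕ} (hd : 1 ≤ d) :
    ∑ z ∈ Icc 1 X ×ˢ Icc 1 X ×ˢ Icc 1 X with (z.1.gcd z.2.1).gcd z.2.2 = d,
      (d : ℝ) / (max z.1 z.2.1 : ℕ) ≤ 2 * X ^ 2 * ((d : ℝ) ^ 2)⁻¹ := by
  set B := Icc 1 (X / d)
  have hsub : {z ∈ Icc 1 X ×ˢ Icc 1 X ×ˢ Icc 1 X | (z.1.gcd z.2.1).gcd z.2.2 = d} ⊆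
      (B ×ˢ B ×ˢ B).image fun w => (d * w.1, d * w.2.1, d * w.2.2) := by
    rintro ⟨a, b, c⟩ h
    simp only [mem_filter, mem_product, mem_Icc] at h
    have hab : d ∣ a.gcd b := h.2 ▸ Nat.gcd_dvd_left _ _
    obtain ⟨a, rfl⟩ := hab.trans (Nat.gcd_dvd_left _ _)
    obtain ⟨b, rfl⟩ := hab.trans (Nat.gcd_dvd_right _ _)
    obtain ⟨c, rfl⟩ : d ∣ c := h.2 ▸ Nat.gcd_dvd_right _ _
    have hB : ∀ x, 1 ≤ d * x ∧ d * x ≤ X → x ∈ B := fun x hx => by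
      refine mem_Icc.2 ⟨Nat.pos_of_mul_pos_left hx.1, ?_⟩
      rw [Nat.le_div_iff_mul_le hd, mul_comm]
      exact hx.2
    exact mem_image.2 ⟨(a, b, c), mem_product.2
      ⟨hB a h.1.1, mem_product.2 ⟨hB b h.1.2.1, hB c h.1.2.2⟩⟩, rfl⟩
  have hdiv : ((X / d : ℕ) : ℝ) ≤ X / d := Nat.cast_div_le
  calc _ ≤ ∑ z ∈ (B ×ˢ B ×ˢ B).image fun w => (d * w.1, d * w.2.1, d * w.2.2),
        (d : ℝ) / (max z.1 z.2.1 : ℕ) :=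
      sum_le_sum_of_subset_of_nonneg hsub fun _ _ _ => by positivity
    _ = ∑ w ∈ B ×ˢ B ×ˢ B, ((max w.1 w.2.1 : ℕ) : ℝ)⁻¹ := by
      rw [sum_image fun w _ w' _ h => by
        simpa [Prod.ext_iff, (Nat.pos_iff_ne_zero.1 hd)] using h]
      refine sum_congr rfl fun w _ => ?_
      rw [Nat.mul_max_mul_left, Nat.cast_mul, div_mul_cancel_left₀ (by positivity)]
    _ = (X / d : ℕ) * ∑ w ∈ B ×ˢ B, ((max w.1 w.2 : ℕ) : ℝ)⁻¹ := by
      simp only [sum_product, sum_const, B, Nat.card_Icc, Nat.add_sub_cancel, nsmul_eq_mul, mul_sum]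
    _ ≤ (X / d : ℕ) * (2 * (X / d : ℕ)) := by gcongr; exact sum_Icc_inv_max_le _
    _ ≤ X / d * (2 * (X / d)) := by gcongr
    _ = _ := by ring

lemma sum_Icc_gcd_div_max_le (X : ℕ) :
    ∑ z ∈ Icc 1 X ×ˢ Icc 1 X ×ˢ Icc 1 X,
      ((z.1.gcd z.2.1).gcd z.2.2 : ℝ) / (max z.1 z.2.1 : ℕ) ≤ 4 * X ^ 2 := by
  have hgcd : ∀ z ∈ Icc 1 X ×ˢ Icc 1 X ×ˢ Icc 1 X, (z.1.gcd z.2.1).gcd z.2.2 ∈ Icc 1 X := by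
    rintro ⟨a, b, c⟩ h
    simp only [mem_product, mem_Icc] at h
    have hab : 0 < a.gcd b := Nat.gcd_pos_of_pos_left _ h.1.1
    exact mem_Icc.2 ⟨Nat.gcd_pos_of_pos_left _ hab,
      (Nat.gcd_le_left _ hab).trans ((Nat.gcd_le_left _ h.1.1).trans h.1.2)⟩
  have hinv : ∑ d ∈ Icc 1 X, ((d : ℝ) ^ 2)⁻¹ ≤ 2 := by
    have h := sum_Ioo_inv_sq_le (α := ℝ) 0 (X + 1)
    rw [show Ioo 0 (X + 1) = Icc 1 X by ext; simp only [mem_Ioo, mem_Icc]; lia] at h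
    simpa using h
  rw [← sum_fiberwise_of_maps_to hgcd]
  calc _ ≤ ∑ d ∈ Icc 1 X, 2 * (X : ℝ) ^ 2 * ((d : ℝ) ^ 2)⁻¹ := by
        refine sum_le_sum fun d hd => ?_
        refine le_trans (le_of_eq (sum_congr rfl fun z hz => ?_))
          (sum_Icc_gcd_eq_div_max_le X (mem_Icc.1 hd).1)
        rw [(mem_filter.1 hz).2]
    _ ≤ 2 * (X : ℝ) ^ 2 * 2 := by rw [← mul_sum]; gcongr
    _ = _ := by ring

lemma card_sum_three_products_eq_zero_le (hXY : X ≤ Y) :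
    #{q ∈ (Icc 1 X ×ˢ Icc (-Y : ℤ) Y) ×ˢ (Icc 1 X ×ˢ Icc (-Y : ℤ) Y) ×ˢ
        (Icc 1 X ×ˢ Icc (-Y : ℤ) Y) |
      q.1.1 * q.1.2 + (q.2.1.1 * q.2.1.2 + q.2.2.1 * q.2.2.2) = (0 : ℤ)} ≤
      36 * (X * Y) ^ 2 := by
  set H := Icc 1 X
  set A := H ×ˢ Icc (-Y : ℤ) Y
  set Q := {q ∈ A ×ˢ A ×ˢ A |
      q.1.1 * q.1.2 + (q.2.1.1 * q.2.1.2 + q.2.2.1 * q.2.2.2) = (0 : ℤ)}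
  have hmaps : ∀ q ∈ Q, (q.1.1, q.2.1.1, q.2.2.1) ∈ H ×ˢ H ×ˢ H := fun q hq => by
    simp only [Q, A, mem_filter, mem_product] at hq ⊢
    exact ⟨hq.1.1.1, hq.1.2.1.1, hq.1.2.2.1⟩
  have hfib : ∀ z ∈ H ×ˢ H ×ˢ H, (#{q ∈ Q | (q.1.1, q.2.1.1, q.2.2.1) = z} : ℝ) ≤
      9 * Y ^ 2 * (((z.1.gcd z.2.1).gcd z.2.2 : ℝ) / (max z.1 z.2.1 : ℕ)) := by
    rintro ⟨a, b, c⟩ hz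
    simp only [H, mem_product, mem_Icc] at hz
    have hcount := card_linear_three_mul_max_le hz.1.1 (hz.1.2.trans hXY) hz.2.1.1
      (hz.2.1.2.trans hXY) c
    rw [← mul_div_assoc, le_div_iff₀ (by have := hz.1.1; positivity)]
    refine le_trans ?_ (show ((_ : ℕ) : ℝ) ≤ _ by exact_mod_cast hcount)
    rw [Nat.cast_mul]
    gcongr
    refine card_le_card_of_injOn (fun q => (q.1.2, q.2.1.2, q.2.2.2)) ?_ ?_
    · rintro ⟨⟨_, y₁⟩, ⟨_, y₂⟩, ⟨_, y₃⟩⟩ hq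
      simp only [Q, A, coe_filter, mem_filter, mem_product, Set.mem_ofPred_eq,
        Prod.mk.injEq] at hq ⊢
      obtain ⟨⟨hmem, h0⟩, rfl, rfl, rfl⟩ := hq
      exact ⟨⟨hmem.1.2, hmem.2.1.2, hmem.2.2.2⟩, by rw [add_assoc, h0]⟩
    · rintro ⟨⟨_, y₁⟩, ⟨_, y₂⟩, ⟨_, y₃⟩⟩ hq ⟨⟨_, y₁'⟩, ⟨_, y₂'⟩, ⟨_, y₃'⟩⟩ hq' h
      simp only [mem_coe, mem_filter, Prod.mk.injEq] at hq hq' h ⊢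
      lia
  have hreal : (#Q : ℝ) ≤ 36 * (X * Y) ^ 2 := by
    rw [card_eq_sum_card_fiberwise hmaps, Nat.cast_sum]
    calc _ ≤ ∑ z ∈ H ×ˢ H ×ˢ H,
          9 * (Y : ℝ) ^ 2 * (((z.1.gcd z.2.1).gcd z.2.2 : ℝ) / (max z.1 z.2.1 : ℕ)) :=
          sum_le_sum hfib
      _ ≤ 9 * Y ^ 2 * (4 * X ^ 2) := by
        rw [← mul_sum]
        gcongr
        exact sum_Icc_gcd_div_max_le X
      _ = _ := by ring
  exact_mod_cast hreal

end LinearEquations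

section ExponentialSums

open MeasureTheory AddCircle

variable {ι κ : Type*}

lemma integral_fourier (n : ℤ) :
    ∫ t : UnitAddCircle, fourier n t ∂haarAddCircle = if n = 0 then 1 else 0 := by
  have h := congrFun (fourierCoeff_fourier (T := 1) n) 0
  simp only [fourierCoeff, neg_zero, fourier_zero, one_smul] at h
  rw [h, Pi.single_apply]
  simp only [eq_comm]

lemma integrable_haarAddCircle_of_continuous {E : Type*} [NormedAddCommGroup E]
    {f : UnitAddCircle → E} (hf : Continuous f) : Integrable f haarAddCircle :=
  hf.integrable_of_hasCompactSupport (HasCompactSupport.of_compactSpace f)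

lemma norm_fourier_apply (n : ℤ) (t : UnitAddCircle) : ‖(fourier n t : ℂ)‖ = 1 := by
  rw [fourier_apply]
  exact Circle.norm_coe _

lemma fourier_sum (s : Finset ι) (φ : ι → ℤ) (t : UnitAddCircle) :
    (fourier (∑ i ∈ s, φ i) t : ℂ) = ∏ i ∈ s, fourier (φ i) t := by
  classical
  induction s using Finset.induction_on with
  | empty => simp
  | insert i s hi ih => rw [sum_insert hi, prod_insert hi, fourier_add, ih]

/-- The exponential sum `∑ e(φ i t)` over `i ∈ s`, as a function of `t ∈ ℝ/ℤ`. -/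
noncomputable def expSum (s : Finset ι) (φ : ι → ℤ) (t : UnitAddCircle) : ℂ :=
  ∑ i ∈ s, fourier (φ i) t

@[fun_prop]
lemma continuous_expSum (s : Finset ι) (φ : ι → ℤ) : Continuous (expSum s φ) := by
  unfold expSum
  fun_prop

lemma expSum_mul (s : Finset ι) (r : Finset κ) (φ : ι → ℤ) (ψ : κ → ℤ) (t : UnitAddCircle) :
    expSum s φ t * expSum r ψ t = expSum (s ×ˢ r) (fun z => φ z.1 + ψ z.2) t := by
  simp only [expSum, sum_mul_sum, sum_product, fourier_add]

lemma expSum_pow (s : Finset ι) (φ : ι → ℤ) (n : ℕ) (t : UnitAddCircle) :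
    expSum s φ t ^ n =
      expSum (Fintype.piFinset fun _ : Fin n => s) (fun x => ∑ i, φ (x i)) t := by
  simp only [expSum, fourier_sum, sum_pow']

lemma conj_expSum (s : Finset ι) (φ : ι → ℤ) (t : UnitAddCircle) :
    starRingEnd ℂ (expSum s φ t) = expSum s (fun i => -φ i) t := by
  simp only [expSum, map_sum, fourier_neg]

lemma norm_expSum_sq (s : Finset ι) (φ : ι → ℤ) (t : UnitAddCircle) :
    ((‖expSum s φ t‖ ^ 2 : ℝ) : ℂ) = expSum (s ×ˢ s) (fun z => φ z.1 - φ z.2) t := by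
  simp only [sub_eq_add_neg]
  rw [← expSum_mul s s φ (fun i => -φ i), ← conj_expSum, Complex.mul_conj']
  push_cast
  rfl

lemma norm_expSum_pow (s : Finset ι) (φ : ι → ℤ) (n : ℕ) (t : UnitAddCircle) :
    ((‖expSum s φ t‖ ^ (2 * n) : ℝ) : ℂ) =
      expSum ((Fintype.piFinset fun _ : Fin n => s) ×ˢ (Fintype.piFinset fun _ : Fin n => s))
        (fun z => ∑ i, φ (z.1 i) - ∑ i, φ (z.2 i)) t := by
  rw [← norm_expSum_sq (Fintype.piFinset fun _ : Fin n => s) (fun x => ∑ i, φ (x i)),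
    ← expSum_pow, norm_pow, ← pow_mul, mul_comm]

lemma integral_expSum_mul_fourier_neg (s : Finset ι) (φ : ι → ℤ) (m : ℤ) :
    ∫ t, expSum s φ t * fourier (-m) t ∂haarAddCircle = #{i ∈ s | φ i = m} := by
  simp only [expSum, sum_mul, ← fourier_add]
  rw [integral_finsetSum _ fun i _ => integrable_haarAddCircle_of_continuous (by fun_prop)]
  simp only [integral_fourier, add_neg_eq_zero]
  rw [sum_boole]

lemma card_filter_eq_le_integral_norm (s : Finset ι) (φ : ι → ℤ) (m : ℤ) :
    (#{i ∈ s | φ i = m} : ℝ) ≤ ∫ t, ‖expSum s φ t‖ ∂haarAddCircle := by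
  calc (#{i ∈ s | φ i = m} : ℝ) = ‖∫ t, expSum s φ t * fourier (-m) t ∂haarAddCircle‖ := by
        rw [integral_expSum_mul_fourier_neg, Complex.norm_natCast]
    _ ≤ ∫ t, ‖expSum s φ t * fourier (-m) t‖ ∂haarAddCircle := norm_integral_le_integral_norm _
    _ = _ := by simp only [norm_mul, norm_fourier_apply, mul_one]

lemma integral_eq_card_of_ofReal_eq_expSum {s : Finset ι} {φ : ι → ℤ} {u : UnitAddCircle → ℝ}
    (hu : ∀ t, (u t : ℂ) = expSum s φ t) :
    ∫ t, u t ∂haarAddCircle = #{i ∈ s | φ i = 0} := by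
  apply Complex.ofReal_injective
  rw [← integral_complex_ofReal, Complex.ofReal_natCast, ← integral_expSum_mul_fourier_neg]
  simp only [hu, neg_zero, fourier_zero, mul_one]

end ExponentialSums

section MeanValue

open MeasureTheory AddCircle

variable {ι : Type*}

/-- The mean value `∫ |∑ e(f x t)| ^ (2s) dt` of the exponential sum over `x ∈ A`, in its
arithmetic form: the number of solutions of `f x₁ + ⋯ + f xₛ = f y₁ + ⋯ + f yₛ` with all
variables in `A`. -/
def meanValue (A : Finset ι) (f : ι → ℤ) (s : ℕ) : ℕ :=
  #{z ∈ (Fintype.piFinset fun _ : Fin s => A) ×ˢ (Fintype.piFinset fun _ : Fin s => A) |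
    ∑ i, f (z.1 i) - ∑ i, f (z.2 i) = 0}

lemma integral_norm_expSum_pow (A : Finset ι) (f : ι → ℤ) (s : ℕ) :
    ∫ t, ‖expSum A f t‖ ^ (2 * s) ∂haarAddCircle = meanValue A f s :=
  integral_eq_card_of_ofReal_eq_expSum fun t => norm_expSum_pow A f s t

lemma card_sum_sub_sum_eq_le_meanValue (A : Finset ι) (f : ι → ℤ) (s : ℕ) (m : ℤ) :
    #{z ∈ (Fintype.piFinset fun _ : Fin s => A) ×ˢ (Fintype.piFinset fun _ : Fin s => A) |
      ∑ i, f (z.1 i) - ∑ i, f (z.2 i) = m} ≤ meanValue A f s := by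
  have h := card_filter_eq_le_integral_norm
    ((Fintype.piFinset fun _ : Fin s => A) ×ˢ (Fintype.piFinset fun _ : Fin s => A))
    (fun z => ∑ i, f (z.1 i) - ∑ i, f (z.2 i)) m
  simp only [← norm_expSum_pow, Complex.norm_real, norm_pow, norm_norm] at h
  rw [integral_norm_expSum_pow] at h
  exact_mod_cast h

lemma card_sum_eq_le_meanValue (A : Finset ι) (f : ι → ℤ) (s : ℕ) (m : ℤ) :
    #{x ∈ Fintype.piFinset fun _ : Fin (2 * s) => A | ∑ i, f (x i) = m} ≤ meanValue A f s := by
  have h := card_filter_eq_le_integral_norm (Fintype.piFinset fun _ : Fin (2 * s) => A)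
    (fun x => ∑ i, f (x i)) m
  simp only [← expSum_pow, norm_pow] at h
  rw [integral_norm_expSum_pow] at h
  exact_mod_cast h

lemma meanValue_mono {A B : Finset ι} (hAB : A ⊆ B) (f : ι → ℤ) (s : ℕ) :
    meanValue A f s ≤ meanValue B f s :=
  card_le_card <| filter_subset_filter _ <| product_subset_product
    (Fintype.piFinset_subset _ _ fun _ => hAB) (Fintype.piFinset_subset _ _ fun _ => hAB)

lemma meanValue_one_le_card {A : Finset ι} {f : ι → ℤ} (hf : Set.InjOn f A) :
    meanValue A f 1 ≤ #A := by
  have hmem : ∀ z : (Fin 1 → ι) × (Fin 1 → ι), z ∈ ((Fintype.piFinset fun _ : Fin 1 => A) ×ˢ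
      (Fintype.piFinset fun _ : Fin 1 => A)).filter (fun z =>
        ∑ i, f (z.1 i) - ∑ i, f (z.2 i) = 0) → z.1 0 ∈ A ∧ z.2 = z.1 := fun z hz => by
    simp only [mem_filter, mem_product, Fintype.mem_piFinset, Fin.forall_fin_one,
      Fin.sum_univ_one, sub_eq_zero] at hz
    exact ⟨hz.1.1, funext fun i => by
      rw [Subsingleton.elim i 0]; exact (hf hz.1.1 hz.1.2 hz.2).symm⟩
  refine card_le_card_of_injOn (fun z => z.1 0) (fun z hz => (hmem z hz).1) ?_
  intro z hz w hw (h : z.1 0 = w.1 0)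
  have h₁ : z.1 = w.1 := funext fun i => by rw [Subsingleton.elim i 0, h]
  exact Prod.ext h₁ (by rw [(hmem z hz).2, (hmem w hw).2, h₁])

end MeanValue

section Differencing

lemma sum_range_sum_range_eq {M : Type*} [AddCommMonoid M] (f : ℕ → ℕ → M) (n : ℕ) :
    ∑ x ∈ range n, ∑ y ∈ range n, f x y = ∑ x ∈ range n, f x x +
      ∑ h ∈ Ico 1 n, ∑ y ∈ range (n - h), (f (y + h) y + f y (y + h)) := by
  have htriangle : ∑ x ∈ range n, ∑ y ∈ range n, f x y =
      ∑ x ∈ range n, f x x + ∑ x ∈ range n, ∑ y ∈ range x, (f x y + f y x) := by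
    induction n with
    | zero => simp
    | succ n ih =>
      simp only [sum_range_succ, sum_add_distrib] at ih ⊢
      rw [ih]
      abel
  rw [htriangle, sum_sigma', sum_sigma']
  congr 1
  refine sum_bij' (fun p _ => ⟨p.1 - p.2, p.2⟩) (fun p _ => ⟨p.2 + p.1, p.2⟩) ?_ ?_ ?_ ?_ ?_
  all_goals rintro ⟨x, y⟩ h
  all_goals simp only [mem_sigma, mem_range, mem_Ico] at h
  all_goals simp only [mem_sigma, mem_range, mem_Ico, Sigma.mk.injEq, heq_eq_eq, and_true]
  · lia
  · lia
  · lia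
  · lia
  · rw [Nat.add_sub_cancel' h.2.le]

lemma norm_sum_range_sq_le (z : ℕ → ℂ) (n : ℕ) :
    ‖∑ x ∈ range n, z x‖ ^ 2 ≤ ∑ x ∈ range n, ‖z x‖ ^ 2 +
      2 * ∑ h ∈ Ico 1 n, ‖∑ x ∈ range (n - h), z (x + h) * starRingEnd ℂ (z x)‖ := by
  have hexpand : ‖∑ x ∈ range n, z x‖ ^ 2 =
      ‖∑ x ∈ range n, ∑ y ∈ range n, z x * starRingEnd ℂ (z y)‖ := by
    rw [← sum_mul_sum, ← map_sum, norm_mul, RCLike.norm_conj, sq]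
  rw [hexpand, sum_range_sum_range_eq, mul_sum]
  refine norm_add_le_of_le (norm_sum_le_of_le _ fun x _ => ?_) (norm_sum_le_of_le _ fun h _ => ?_)
  · rw [norm_mul, RCLike.norm_conj, sq]
  · have hconj : ∑ y ∈ range (n - h), z y * starRingEnd ℂ (z (y + h)) =
        starRingEnd ℂ (∑ y ∈ range (n - h), z (y + h) * starRingEnd ℂ (z y)) := by
      simp only [map_sum, map_mul, Complex.conj_conj, mul_comm]
    rw [sum_add_distrib, hconj, two_mul]
    exact norm_add_le_of_le le_rfl (RCLike.norm_conj _).le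

lemma norm_expSum_range_sq_le {f : ℕ → ℤ} {g : ℕ → ℕ → ℤ}
    (hg : ∀ h x, f (x + h) = f x + h * g h x) (n : ℕ) (t : UnitAddCircle) :
    ‖expSum (range n) f t‖ ^ 2 ≤
      n + 2 * ∑ h ∈ Ico 1 n, ‖expSum (range (n - h)) (fun x => h * g h x) t‖ := by
  have hterm : ∀ h x, (fourier (f (x + h)) t : ℂ) * starRingEnd ℂ (fourier (f x) t) =
      fourier (h * g h x) t := fun h x => by
    rw [← fourier_neg, ← fourier_add, hg, add_neg_cancel_comm]
  simpa only [expSum, hterm, norm_fourier_apply, one_pow, sum_const, card_range, nsmul_eq_mul,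
    mul_one] using
    norm_sum_range_sq_le (fun x => fourier (f x) t) n

lemma add_sum_pow_mul_le {ι : Type*} (A : Finset ι) {a : ℝ} {G : ι → ℝ} (ha : 0 ≤ a)
    (hG : ∀ i ∈ A, 0 ≤ G i) (n m : ℕ) :
    (a + ∑ i ∈ A, G i) ^ ((n + 1) * m) ≤
      2 ^ ((n + 1) * m) * (a ^ ((n + 1) * m) + (#A ^ n * ∑ i ∈ A, G i ^ (n + 1)) ^ m) := by
  have hS : 0 ≤ ∑ i ∈ A, G i := sum_nonneg hG
  calc (a + ∑ i ∈ A, G i) ^ ((n + 1) * m)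
      ≤ 2 ^ ((n + 1) * m - 1) * (a ^ ((n + 1) * m) + (∑ i ∈ A, G i) ^ ((n + 1) * m)) :=
        add_pow_le ha hS _
    _ ≤ 2 ^ ((n + 1) * m) * (a ^ ((n + 1) * m) + ((∑ i ∈ A, G i) ^ (n + 1)) ^ m) := by
        rw [pow_mul (∑ i ∈ A, G i)]
        gcongr
        · exact one_le_two
        · exact Nat.sub_le _ _
    _ ≤ _ := by
        gcongr
        exact pow_sum_le_card_mul_sum_pow hG n

end Differencing

section DifferencedMoment

open MeasureTheory AddCircle

lemma card_filter_prod_prod_le_of_fiber {α β : Type*} [DecidableEq β] {Z : Finset α} {A : Finset β}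
    {F : α → β} {R : ℕ} (hF : ∀ z ∈ Z, F z ∈ A) (hR : ∀ b ∈ A, #{z ∈ Z | F z = b} ≤ R)
    (p : β → β → β → Prop) [∀ a b c, Decidable (p a b c)] :
    #{ζ ∈ Z ×ˢ Z ×ˢ Z | p (F ζ.1) (F ζ.2.1) (F ζ.2.2)} ≤
      R ^ 3 * #{q ∈ A ×ˢ A ×ˢ A | p q.1 q.2.1 q.2.2} := by
  refine card_le_mul_card_image_of_maps_to (f := fun ζ => (F ζ.1, F ζ.2.1, F ζ.2.2)) ?_ _ ?_
  · rintro ⟨x, y, z⟩ h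
    simp only [mem_filter, mem_product] at h ⊢
    exact ⟨⟨hF x h.1.1, hF y h.1.2.1, hF z h.1.2.2⟩, h.2⟩
  · rintro ⟨a, b, c⟩ h
    simp only [mem_filter, mem_product] at h
    calc _ ≤ #({z ∈ Z | F z = a} ×ˢ {z ∈ Z | F z = b} ×ˢ {z ∈ Z | F z = c}) := by
          refine card_le_card fun ζ hζ => ?_
          simp only [mem_filter, mem_product, Prod.mk.injEq] at hζ ⊢
          tauto
      _ ≤ R * (R * R) := by
          rw [card_product, card_product]
          gcongr
          exacts [hR a h.1.1, hR b h.1.2.1, hR c h.1.2.2]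
      _ = R ^ 3 := by ring

lemma sum_norm_expSum_pow_eq_expSum {ι : Type*} (H : Finset ℕ) (B : ℕ → Finset ι)
    (f : ℕ → ι → ℤ) (s : ℕ) (t : UnitAddCircle) :
    ((∑ h ∈ H, ‖expSum (B h) (fun x => h * f h x) t‖ ^ (2 * s) : ℝ) : ℂ) =
      expSum (H.sigma fun h =>
          (Fintype.piFinset fun _ : Fin s => B h) ×ˢ (Fintype.piFinset fun _ : Fin s => B h))
        (fun ζ => ζ.1 * (∑ i, f ζ.1 (ζ.2.1 i) - ∑ i, f ζ.1 (ζ.2.2 i))) t := by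
  rw [Complex.ofReal_sum, expSum, sum_sigma]
  refine sum_congr rfl fun h _ => ?_
  rw [norm_expSum_pow, expSum]
  simp only [mul_sub, mul_sum]

lemma integral_sum_norm_expSum_pow_cube_le {ι : Type*} {X W s R : ℕ} (hXW : X ≤ s * W)
    {B : ℕ → Finset ι} {g : ℕ → ι → ℕ} (hg : ∀ h ∈ Icc 1 X, ∀ x ∈ B h, g h x ≤ W)
    (hR : ∀ h ∈ Icc 1 X, meanValue (B h) (fun x => (g h x : ℤ)) s ≤ R) :
    ∫ t, (∑ h ∈ Icc 1 X, ‖expSum (B h) (fun x => (h : ℤ) * g h x) t‖ ^ (2 * s)) ^ 3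
      ∂haarAddCircle ≤ R ^ 3 * (36 * (X * (s * W)) ^ 2) := by
  classical
  let Z := (Icc 1 X).sigma fun h =>
    (Fintype.piFinset fun _ : Fin s => B h) ×ˢ (Fintype.piFinset fun _ : Fin s => B h)
  let F : (Σ _ : ℕ, (Fin s → ι) × (Fin s → ι)) → ℕ × ℤ := fun ζ =>
    (ζ.1, ∑ i, (g ζ.1 (ζ.2.1 i) : ℤ) - ∑ i, (g ζ.1 (ζ.2.2 i) : ℤ))
  have hF : ∀ ζ ∈ Z, F ζ ∈ Icc 1 X ×ˢ Icc (-(s * W : ℕ) : ℤ) (s * W : ℕ) := by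
    rintro ⟨h, x, y⟩ hζ
    simp only [Z, mem_sigma, mem_product, Fintype.mem_piFinset] at hζ
    have hsum : ∀ x : Fin s → ι, (∀ i, x i ∈ B h) → ∑ i, g h (x i) ≤ s * W := fun x hx => by
      simpa using sum_le_card_nsmul univ _ W fun i _ => hg h hζ.1 (x i) (hx i)
    have hx := hsum x hζ.2.1
    have hy := hsum y hζ.2.2
    refine mem_product.2 ⟨hζ.1, mem_Icc.2 ?_⟩
    simp only [F, ← Nat.cast_sum]
    lia
  have hfiber : ∀ q ∈ Icc 1 X ×ˢ Icc (-(s * W : ℕ) : ℤ) (s * W : ℕ), #{ζ ∈ Z | F ζ = q} ≤ R := by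
    rintro ⟨h, m⟩ hq
    refine le_trans ?_ ((card_sum_sub_sum_eq_le_meanValue (B h) (fun x => (g h x : ℤ)) s m).trans
      (hR h (mem_product.1 hq).1))
    refine card_le_card_of_injOn Sigma.snd ?_ ?_
    · rintro ⟨h', z⟩ hz
      simp only [Z, F, mem_coe, mem_filter, mem_sigma, Prod.mk.injEq] at hz ⊢
      obtain ⟨⟨-, hmem⟩, rfl, heq⟩ := hz
      exact ⟨hmem, heq⟩
    · rintro ⟨h₁, z₁⟩ hz₁ ⟨h₂, z₂⟩ hz₂ (rfl : z₁ = z₂)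
      simp only [F, mem_coe, mem_filter, Prod.mk.injEq] at hz₁ hz₂
      rw [hz₁.2.1, hz₂.2.1]
  have hU : ∀ t, ((∑ h ∈ Icc 1 X, ‖expSum (B h) (fun x => (h : ℤ) * g h x) t‖ ^ (2 * s) : ℝ) : ℂ)
      = expSum Z (fun ζ => (F ζ).1 * (F ζ).2) t :=
    sum_norm_expSum_pow_eq_expSum (Icc 1 X) B (fun h x => g h x) s
  have hU3 := integral_eq_card_of_ofReal_eq_expSum (s := Z ×ˢ Z ×ˢ Z)
    (u := fun t => (∑ h ∈ Icc 1 X, ‖expSum (B h) (fun x => (h : ℤ) * g h x) t‖ ^ (2 * s)) ^ 3)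
    fun t => by
      rw [Complex.ofReal_pow, hU, pow_succ', sq, expSum_mul, expSum_mul]
  rw [hU3]
  have hcard := (card_filter_prod_prod_le_of_fiber hF hfiber fun a b c =>
    (a.1 * a.2 + (b.1 * b.2 + c.1 * c.2) : ℤ) = 0).trans
      (Nat.mul_le_mul_left _ (card_sum_three_products_eq_zero_le hXW))
  exact_mod_cast hcard

end DifferencedMoment

section DifferenceQuotient

open Polynomial

/-- The difference quotient `(p(x + h) - p(x)) / h` as a polynomial in `x`. It is read off the
Taylor expansion of `p`, so that it makes sense over `ℕ` and for `h = 0`. -/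
noncomputable def diffQuotient (h : ℕ) (p : ℕ[X]) : ℕ[X] :=
  ∑ i ∈ range p.natDegree, C (h ^ i) * hasseDeriv (i + 1) p

lemma eval_add_eq_add_mul_diffQuotient (p : ℕ[X]) (h x : ℕ) :
    p.eval (x + h) = p.eval x + h * (diffQuotient h p).eval x := by
  rw [add_comm x h, ← taylor_eval, eval_eq_sum_range, natDegree_taylor, sum_range_succ',
    diffQuotient, eval_finsetSum, mul_sum, add_comm]
  simp only [taylor_coeff, hasseDeriv_zero, eval_mul, eval_C, pow_zero, mul_one,
    LinearMap.id_coe, id_eq]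
  congr 1
  exact sum_congr rfl fun i _ => by ring

lemma natDegree_diffQuotient (h : ℕ) (p : ℕ[X]) :
    (diffQuotient h p).natDegree = p.natDegree - 1 := by
  rcases Nat.eq_zero_or_pos p.natDegree with hp | hp
  · simp [diffQuotient, hp]
  refine natDegree_eq_of_le_of_coeff_ne_zero ?_ ?_
  · refine natDegree_sum_le_of_forall_le _ _ fun i _ => ?_
    exact (natDegree_C_mul_le _ _).trans ((natDegree_hasseDeriv_le p _).trans (by lia))
  · rw [diffQuotient, finsetSum_coeff, ← Nat.pos_iff_ne_zero]
    refine sum_pos' (fun _ _ => Nat.zero_le _) ⟨0, mem_range.2 hp, ?_⟩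
    have hlead : p.coeff (p.natDegree - 1 + 1) ≠ 0 := by
      rw [Nat.sub_add_cancel hp]
      exact leadingCoeff_ne_zero.2 (ne_zero_of_natDegree_gt hp)
    simpa [coeff_derivative, Nat.pos_iff_ne_zero] using hlead

lemma eval_monotone (p : ℕ[X]) : Monotone fun x : ℕ => p.eval x := fun x y hxy => by
  simp only [eval_eq_sum_range]
  gcongr

lemma eval_two_mul_le (p : ℕ[X]) (x : ℕ) : p.eval (2 * x) ≤ 2 ^ p.natDegree * p.eval x := by
  rw [eval_eq_sum_range, eval_eq_sum_range, mul_sum]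
  refine sum_le_sum fun i hi => ?_
  calc p.coeff i * (2 * x) ^ i = 2 ^ i * (p.coeff i * x ^ i) := by ring
    _ ≤ 2 ^ p.natDegree * (p.coeff i * x ^ i) := by
      gcongr
      · exact one_le_two
      · exact mem_range_succ_iff.1 hi

lemma mul_eval_diffQuotient_le (p : ℕ[X]) {h x : ℕ} (hx : h ≤ x) :
    x * (diffQuotient h p).eval x ≤ 2 ^ p.natDegree * p.eval x := by
  have hmono : (diffQuotient h p).eval x ≤ (diffQuotient x p).eval x := by
    simp only [diffQuotient, eval_finsetSum, eval_mul, eval_C]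
    gcongr
  calc x * (diffQuotient h p).eval x ≤ p.eval x + x * (diffQuotient x p).eval x := by
        exact (Nat.mul_le_mul_left x hmono).trans (Nat.le_add_left _ _)
    _ = p.eval (2 * x) := by rw [← eval_add_eq_add_mul_diffQuotient, two_mul]
    _ ≤ _ := eval_two_mul_le p x

end DifferenceQuotient

section MeanValueInduction

open Polynomial MeasureTheory AddCircle

/-- The bound of the expected order `P ^ (2s - k)` for the mean value over `0 ≤ x ≤ P` of
polynomials of degree `k`, uniformly in polynomials whose coefficients are bounded in the sense
that `p(P) = O(P ^ k)`. -/
def MeanValueBound (k s : ℕ) : Prop :=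
  ∀ C : ℕ, ∃ K : ℕ, ∀ P ≥ 1, ∀ p : ℕ[X], p.natDegree = k → p.eval P ≤ C * P ^ k →
    meanValue (range (P + 1)) (fun x : ℕ => (↑(p.eval x) : ℤ)) s * P ^ k ≤ K * P ^ (2 * s)

lemma meanValueBound_one_one : MeanValueBound 1 1 := by
  intro C
  refine ⟨2, fun P hP p hp _ => ?_⟩
  have hinj : Set.InjOn (fun x : ℕ => (↑(p.eval x) : ℤ)) (range (P + 1)) := fun x _ y _ h => by
    have hlead : p.coeff 1 ≠ 0 := by
      rw [← hp]
      exact leadingCoeff_ne_zero.2 (ne_zero_of_natDegree_gt (hp ▸ Nat.zero_lt_one))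
    simpa [eval_eq_sum_range, hp, sum_range_succ, hlead] using h
  calc _ ≤ #(range (P + 1)) * P ^ 1 := by gcongr; exact meanValue_one_le_card hinj
    _ = (P + 1) * P := by rw [card_range, pow_one]
    _ ≤ (P + P) * P := by gcongr
    _ = 2 * P ^ (2 * 1) := by ring

lemma norm_expSum_eval_pow_le {P s : ℕ} (hP : 1 ≤ P) (hs : 1 ≤ s) (p : ℕ[X])
    (t : UnitAddCircle) :
    ‖expSum (range (P + 1)) (fun x : ℕ => (↑(p.eval x) : ℤ)) t‖ ^ (2 * (6 * s)) ≤
      4 ^ (6 * s) * ((P : ℝ) ^ (6 * s) + ((P : ℝ) ^ (2 * s - 1) * ∑ h ∈ Icc 1 P,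
        ‖expSum (range (P + 1 - h)) (fun x : ℕ => (h : ℤ) * ↑((diffQuotient h p).eval x)) t‖ ^
          (2 * s)) ^ 3) := by
  set G : ℕ → ℝ := fun h =>
    ‖expSum (range (P + 1 - h)) (fun x : ℕ => (h : ℤ) * ↑((diffQuotient h p).eval x)) t‖
  have hsq : ‖expSum (range (P + 1)) (fun x : ℕ => (↑(p.eval x) : ℤ)) t‖ ^ 2 ≤
      2 * (P + ∑ h ∈ Icc 1 P, G h) := by
    have hdiff := norm_expSum_range_sq_le (f := fun x : ℕ => (↑(p.eval x) : ℤ))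
      (g := fun h x => ↑((diffQuotient h p).eval x))
      (fun h x => by rw [eval_add_eq_add_mul_diffQuotient]; push_cast; rfl) (P + 1) t
    have hP' : (1 : ℝ) ≤ P := by exact_mod_cast hP
    rw [Ico_add_one_right_eq_Icc] at hdiff
    push_cast at hdiff
    linarith
  have hholder := add_sum_pow_mul_le (Icc 1 P) (Nat.cast_nonneg P)
    (fun h _ => norm_nonneg _ : ∀ h ∈ Icc 1 P, 0 ≤ G h) (2 * s - 1) 3
  rw [Nat.sub_add_cancel (by lia), Nat.card_Icc, Nat.add_sub_cancel,
    show 2 * s * 3 = 6 * s by ring] at hholder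
  calc _ ≤ (2 * (P + ∑ h ∈ Icc 1 P, G h)) ^ (6 * s) := by rw [pow_mul]; gcongr
    _ = 2 ^ (6 * s) * (P + ∑ h ∈ Icc 1 P, G h) ^ (6 * s) := mul_pow _ _ _
    _ ≤ 2 ^ (6 * s) * (2 ^ (6 * s) * _) := by gcongr
    _ = _ := by rw [← mul_assoc, ← mul_pow]; norm_num [G]

lemma meanValue_eval_le {P s W R : ℕ} (hP : 1 ≤ P) (hs : 1 ≤ s) (hPW : P ≤ s * W) {p : ℕ[X]}
    (hW : ∀ h ∈ Icc 1 P, (diffQuotient h p).eval P ≤ W)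
    (hR : ∀ h ∈ Icc 1 P,
      meanValue (range (P + 1)) (fun x : ℕ => (↑((diffQuotient h p).eval x) : ℤ)) s ≤ R) :
    meanValue (range (P + 1)) (fun x : ℕ => (↑(p.eval x) : ℤ)) (6 * s) ≤
      4 ^ (6 * s) * (P ^ (6 * s) + (P ^ (2 * s - 1) * R) ^ 3 * (36 * (P * (s * W)) ^ 2)) := by
  have hsub : ∀ h, range (P + 1 - h) ⊆ range (P + 1) := fun h =>
    range_subset_range.2 (Nat.sub_le _ _)
  set U : UnitAddCircle → ℝ := fun t => ∑ h ∈ Icc 1 P,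
    ‖expSum (range (P + 1 - h)) (fun x : ℕ => (h : ℤ) * ↑((diffQuotient h p).eval x)) t‖ ^ (2 * s)
  have hU : Continuous U := by fun_prop
  have hUcube : ∫ t, U t ^ 3 ∂haarAddCircle ≤ R ^ 3 * (36 * (P * (s * W)) ^ 2) :=
    integral_sum_norm_expSum_pow_cube_le hPW
      (fun h hh x hx => (eval_monotone _ (mem_range_succ_iff.1 (hsub h hx))).trans (hW h hh))
      fun h hh => (meanValue_mono (hsub h) _ s).trans (hR h hh)
  have hreal : (meanValue (range (P + 1)) (fun x : ℕ => (↑(p.eval x) : ℤ)) (6 * s) : ℝ) ≤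
      4 ^ (6 * s) * (P ^ (6 * s) + (P ^ (2 * s - 1) * R) ^ 3 * (36 * (P * (s * W)) ^ 2)) := by
    rw [← integral_norm_expSum_pow]
    calc _ ≤ ∫ t, 4 ^ (6 * s) * ((P : ℝ) ^ (6 * s) + (P ^ (2 * s - 1) * U t) ^ 3)
          ∂haarAddCircle :=
          integral_mono (integrable_haarAddCircle_of_continuous (by fun_prop))
            (integrable_haarAddCircle_of_continuous (by fun_prop))
            (norm_expSum_eval_pow_le hP hs p)
      _ = 4 ^ (6 * s) * ((P : ℝ) ^ (6 * s) +
          (P ^ (2 * s - 1)) ^ 3 * ∫ t, U t ^ 3 ∂haarAddCircle) := by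
          simp only [mul_pow]
          rw [integral_const_mul, integral_add (integrable_const _)
            (integrable_haarAddCircle_of_continuous (by fun_prop)), integral_const_mul]
          simp
      _ ≤ 4 ^ (6 * s) * ((P : ℝ) ^ (6 * s) +
          (P ^ (2 * s - 1)) ^ 3 * (R ^ 3 * (36 * (P * (s * W)) ^ 2))) := by gcongr
      _ = _ := by ring
  exact_mod_cast hreal

lemma MeanValueBound.succ {k s : ℕ} (hk : 1 ≤ k) (hks : k + 1 ≤ 6 * s) (H : MeanValueBound k s) :
    MeanValueBound (k + 1) (6 * s) := by
  intro C
  set c := 2 ^ (k + 1) * C + 1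
  obtain ⟨K, hK⟩ := H c
  refine ⟨4 ^ (6 * s) * (1 + 36 * K ^ 3 * (s * c) ^ 2), fun P hP p hp hpC => ?_⟩
  have hs : 1 ≤ s := by lia
  have hq : ∀ h ∈ Icc 1 P, (diffQuotient h p).eval P ≤ c * P ^ k := fun h hh => by
    refine Nat.le_of_mul_le_mul_left ?_ hP
    calc P * (diffQuotient h p).eval P ≤ 2 ^ (k + 1) * p.eval P :=
          hp ▸ mul_eval_diffQuotient_le p (mem_Icc.1 hh).2
      _ ≤ 2 ^ (k + 1) * (C * P ^ (k + 1)) := by gcongr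
      _ = 2 ^ (k + 1) * C * (P * P ^ k) := by ring
      _ ≤ c * (P * P ^ k) := by gcongr; exact Nat.le_succ _
      _ = _ := by ring
  set R := K * P ^ (2 * s) / P ^ k
  have hR : R * P ^ k ≤ K * P ^ (2 * s) := Nat.div_mul_le_self _ _
  have hPW : P ≤ s * (c * P ^ k) :=
    calc P = 1 * (1 * P ^ 1) := by ring
      _ ≤ s * (c * P ^ k) := by gcongr; exact Nat.le_add_left _ _
  have hmean := meanValue_eval_le hP hs hPW hq (R := R) fun h hh => by
    rw [Nat.le_div_iff_mul_le (by positivity)]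
    exact hK P hP _ (by rw [natDegree_diffQuotient, hp, Nat.add_sub_cancel]) (hq h hh)
  have hP2s : P ^ (2 * s) = P ^ (2 * s - 1) * P := by rw [← pow_succ, Nat.sub_add_cancel (by lia)]
  calc _ ≤ 4 ^ (6 * s) * (P ^ (6 * s) + (P ^ (2 * s - 1) * R) ^ 3 *
          (36 * (P * (s * (c * P ^ k))) ^ 2)) * P ^ (k + 1) := by gcongr
    _ = 4 ^ (6 * s) * (P ^ (6 * s + (k + 1)) +
          36 * (s * c) ^ 2 * ((P ^ (2 * s - 1) * P) * (R * P ^ k)) ^ 3) := by ring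
    _ ≤ 4 ^ (6 * s) * (P ^ (12 * s) +
          36 * (s * c) ^ 2 * (P ^ (2 * s) * (K * P ^ (2 * s))) ^ 3) := by
        rw [← hP2s]
        gcongr
        lia
    _ = _ := by ring

lemma meanValueBound_succ_six_pow (k : ℕ) : MeanValueBound (k + 1) (6 ^ k) := by
  induction k with
  | zero => exact meanValueBound_one_one
  | succ k ih =>
    rw [pow_succ']
    refine ih.succ (Nat.le_add_left _ _) ?_
    have := Nat.lt_pow_self (n := k) (a := 6) (by norm_num)
    lia

end MeanValueInduction

section PowerSums

open Polynomial

lemma card_pow_le_meanValue_mul_card_image {ι : Type*} (A : Finset ι) (f : ι → ℤ)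
    (s : ℕ) :
    #A ^ (2 * s) ≤ meanValue A f s *
      #((Fintype.piFinset fun _ : Fin (2 * s) => A).image fun x => ∑ i, f (x i)) := by
  classical
  rw [← Fintype.card_piFinset_const]
  exact card_le_mul_card_image _ _ fun m _ => card_sum_eq_le_meanValue A f s m

lemma exists_pow_le_mul_card_sum_pow {k : ℕ} (hk : k ≠ 0) : ∃ u ≠ 0, ∃ K : ℕ, ∀ P ≥ 1, P ^ k ≤
    K * #((Fintype.piFinset fun _ : Fin u => range (P + 1)).image fun x => ∑ i, x i ^ k) := by
  set s := 6 ^ (k - 1)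
  have H : MeanValueBound k s := by
    simpa only [Nat.sub_add_cancel (Nat.one_le_iff_ne_zero.2 hk)] using
      meanValueBound_succ_six_pow (k - 1)
  obtain ⟨K, hK⟩ := H 1
  refine ⟨2 * s, by positivity, K, fun P hP => Nat.le_of_mul_le_mul_left ?_ (pow_pos hP (2 * s))⟩
  have hmean := hK P hP (X ^ k) (natDegree_X_pow k) (by simp)
  have hcount := card_pow_le_meanValue_mul_card_image (range (P + 1))
    (fun x => ((x ^ k : ℕ) : ℤ)) s
  simp only [eval_pow, eval_X] at hmean
  have himage : ((Fintype.piFinset fun _ : Fin (2 * s) => range (P + 1)).image fun x =>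
      ∑ i, ((x i ^ k : ℕ) : ℤ)) = ((Fintype.piFinset fun _ : Fin (2 * s) => range (P + 1)).image
      fun x => ∑ i, x i ^ k).image Nat.cast := by
    simp only [image_image, Function.comp_def, Nat.cast_sum]
  rw [card_range, himage, card_image_of_injective _ Nat.cast_injective] at hcount
  set M := meanValue (range (P + 1)) (fun x => ((x ^ k : ℕ) : ℤ)) s
  set N := #((Fintype.piFinset fun _ : Fin (2 * s) => range (P + 1)).image fun x => ∑ i, x i ^ k)
  calc P ^ (2 * s) * P ^ k ≤ (P + 1) ^ (2 * s) * P ^ k := by gcongr; exact P.le_succ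
    _ ≤ M * N * P ^ k := by gcongr
    _ = M * P ^ k * N := by ring
    _ ≤ K * P ^ (2 * s) * N := by gcongr
    _ = P ^ (2 * s) * (K * N) := by ring

end PowerSums

section SchnirelmannDensity

open scoped Pointwise

variable {A B : Set ℕ}

open Classical in
lemma card_add_card_le_card_add {a : ℕ} (ha : a ∈ A) (m : ℕ) :
    #{n ∈ Ioc 0 a | n ∈ A + B} + #{n ∈ Ioc 0 m | n ∈ B} ≤
      #{n ∈ Ioc 0 (a + m) | n ∈ A + B} := by
  rw [← card_image_of_injective {n ∈ Ioc 0 m | n ∈ B} (add_right_injective a),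
    ← card_union_of_disjoint]
  · refine card_le_card fun n hn => ?_
    simp only [mem_union, mem_filter, mem_Ioc, mem_image] at hn ⊢
    rcases hn with ⟨⟨h0, h1⟩, h2⟩ | ⟨b, ⟨⟨h0, h1⟩, h2⟩, rfl⟩
    · exact ⟨⟨h0, by lia⟩, h2⟩
    · exact ⟨⟨by lia, by lia⟩, Set.add_mem_add ha h2⟩
  · rw [disjoint_left]
    intro n hn hn'
    simp only [mem_filter, mem_Ioc, mem_image] at hn hn'
    obtain ⟨b, ⟨⟨h0, -⟩, -⟩, rfl⟩ := hn'
    lia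

open Classical in
lemma card_Ioc_succ_filter_mem_of_mem {N : ℕ} (hN : N + 1 ∈ A) :
    #{n ∈ Ioc 0 (N + 1) | n ∈ A} = #{n ∈ Ioc 0 N | n ∈ A} + 1 := by
  rw [← insert_Ioc_right_eq_Ioc_add_one (Nat.zero_le N), filter_insert, if_pos hN,
    card_insert_of_notMem (by simp)]

open Classical in
lemma card_add_schnirelmannDensity_mul_le (hA : 0 ∈ A) (hB : 0 ∈ B) (N : ℕ) :
    (#{n ∈ Ioc 0 N | n ∈ A} : ℝ) + schnirelmannDensity B * (N - #{n ∈ Ioc 0 N | n ∈ A}) ≤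
      #{n ∈ Ioc 0 N | n ∈ A + B} := by
  induction N using Nat.strong_induction_on with
  | _ N ih =>
  by_cases hN : N ∈ A
  · rcases N with _ | N
    · simp
    · have hN' : N + 1 ∈ A + B := ⟨N + 1, hN, 0, hB, add_zero _⟩
      rw [card_Ioc_succ_filter_mem_of_mem hN, card_Ioc_succ_filter_mem_of_mem hN']
      have := ih N N.lt_succ_self
      push_cast
      linarith
  -- Beyond the last element `a` of `A` up to `N`, the translate `a + B` supplies elements of
  -- `A + B`, at least the density of `B` times the length `N - a` of the gap.
  · set a := Nat.findGreatest (· ∈ A) N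
    have ha : a ∈ A := Nat.findGreatest_spec (P := (· ∈ A)) N.zero_le hA
    have haN : a < N := (Nat.findGreatest_le N).lt_of_ne fun h => hN (h ▸ ha)
    have hcard : #{n ∈ Ioc 0 N | n ∈ A} = #{n ∈ Ioc 0 a | n ∈ A} := by
      congr 1
      ext n
      simp only [mem_filter, mem_Ioc]
      exact ⟨fun ⟨⟨h0, h1⟩, h2⟩ => ⟨⟨h0, Nat.le_findGreatest h1 h2⟩, h2⟩,
        fun ⟨⟨h0, h1⟩, h2⟩ => ⟨⟨h0, h1.trans haN.le⟩, h2⟩⟩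
    have hsum := card_add_card_le_card_add (B := B) ha (N - a)
    have hdensity := schnirelmannDensity_mul_le_card_filter (A := B) (n := N - a)
    have hih := ih a haN
    rw [Nat.add_sub_cancel' haN.le, ← Nat.cast_le (α := ℝ)] at hsum
    push_cast [Nat.cast_sub haN.le] at hsum hdensity
    rw [hcard]
    linarith

open Classical in
lemma one_sub_schnirelmannDensity_add_le (hA : 0 ∈ A) (hB : 0 ∈ B) :
    1 - schnirelmannDensity (A + B) ≤
      (1 - schnirelmannDensity A) * (1 - schnirelmannDensity B) := by
  suffices h : schnirelmannDensity A + schnirelmannDensity B * (1 - schnirelmannDensity A) ≤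
      schnirelmannDensity (A + B) by linarith
  refine le_schnirelmannDensity_iff.2 fun n hn => ?_
  rw [le_div_iff₀ (by exact_mod_cast hn)]
  refine le_trans ?_ (card_add_schnirelmannDensity_mul_le hA hB n)
  have hAn := schnirelmannDensity_mul_le_card_filter (A := A) (n := n)
  have hB1 : schnirelmannDensity B ≤ 1 := schnirelmannDensity_le_one
  linarith [mul_le_mul_of_nonneg_left hAn (sub_nonneg.2 hB1)]

open Classical in
lemma one_sub_schnirelmannDensity_nsmul_le (hA : 0 ∈ A) (n : ℕ) :
    1 - schnirelmannDensity (n • A) ≤ (1 - schnirelmannDensity A) ^ n := by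
  induction n with
  | zero => simpa using schnirelmannDensity_nonneg
  | succ n ih =>
    have hA1 : schnirelmannDensity A ≤ 1 := schnirelmannDensity_le_one
    calc 1 - schnirelmannDensity ((n + 1) • A) = 1 - schnirelmannDensity (n • A + A) := by
          simp only [succ_nsmul]
      _ ≤ (1 - schnirelmannDensity (n • A)) * (1 - schnirelmannDensity A) :=
          one_sub_schnirelmannDensity_add_le (Set.zero_mem_nsmul hA) hA
      _ ≤ (1 - schnirelmannDensity A) ^ n * (1 - schnirelmannDensity A) :=
          mul_le_mul_of_nonneg_right ih (sub_nonneg.2 hA1)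
      _ = (1 - schnirelmannDensity A) ^ (n + 1) := (pow_succ _ _).symm

open Classical in
theorem exists_nsmul_eq_univ_of_schnirelmannDensity_pos (hA : 0 ∈ A)
    (hpos : 0 < schnirelmannDensity A) : ∃ h : ℕ, h • A = Set.univ := by
  obtain ⟨n, hn⟩ := exists_pow_lt_of_lt_one (one_half_pos : (0 : ℝ) < 1 / 2)
    (sub_lt_self 1 hpos)
  have hdensity := one_sub_schnirelmannDensity_nsmul_le hA n
  refine ⟨n + n, ?_⟩
  rw [add_nsmul]
  exact add_eq_univ_of_one_le_schirelmannDensity_add_schnirelmannDensity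
    (Set.zero_mem_nsmul hA) (Set.zero_mem_nsmul hA) (by linarith)

open Classical in
lemma schnirelmannDensity_pos_of_le_mul_card {C : ℕ} (h1 : 1 ∈ A)
    (hC : ∀ N, N ≤ C * #{n ∈ range (N + 1) | n ∈ A}) : 0 < schnirelmannDensity A := by
  have hC0 : (0 : ℝ) < 2 * C := by
    have := hC 1
    positivity [show C ≠ 0 by rintro rfl; simp at this]
  refine (inv_pos.2 hC0).trans_le (le_schnirelmannDensity_iff.2 fun N hN => ?_)
  have hone : 1 ≤ #{n ∈ Ioc 0 N | n ∈ A} :=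
    card_pos.2 ⟨1, by simpa [h1, Nat.succ_le_iff] using hN⟩
  have hzero : #{n ∈ range (N + 1) | n ∈ A} ≤ #{n ∈ Ioc 0 N | n ∈ A} + 1 := by
    refine (card_le_card fun n hn => ?_).trans (card_insert_le 0 _)
    simp only [mem_insert, mem_filter, mem_Ioc, mem_range] at hn ⊢
    exact n.eq_zero_or_pos.imp_right fun h0 => ⟨⟨h0, by lia⟩, hn.2⟩
  rw [le_div_iff₀ (by exact_mod_cast hN), inv_mul_le_iff₀ hC0]
  exact_mod_cast calc N ≤ C * #{n ∈ range (N + 1) | n ∈ A} := hC N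
    _ ≤ C * (2 * #{n ∈ Ioc 0 N | n ∈ A}) := Nat.mul_le_mul_left _ (by lia)
    _ = 2 * C * #{n ∈ Ioc 0 N | n ∈ A} := by ring

open Classical in
lemma le_mul_card_of_pow_le {k D K : ℕ} (hk : k ≠ 0) (hD : D ≠ 0) (h0 : 0 ∈ A)
    (hK : ∀ P ≥ 1, P ^ k ≤ K * #{n ∈ range (D * P ^ k + 1) | n ∈ A}) (N : ℕ) :
    N ≤ (D + D * 2 ^ k * K) * #{n ∈ range (N + 1) | n ∈ A} := by
  have hone : 1 ≤ #{n ∈ range (N + 1) | n ∈ A} := card_pos.2 ⟨0, by simp [h0]⟩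
  rcases lt_or_ge N D with hND | hDN
  · calc N ≤ (D + 0) * 1 := by lia
      _ ≤ _ := Nat.mul_le_mul (by lia) hone
  set P := Nat.nthRoot k (N / D)
  have hP : 1 ≤ P := (Nat.le_nthRoot_iff hk).2 <| by
    simpa using (Nat.one_le_div_iff hD.bot_lt).2 hDN
  have hPN : D * P ^ k ≤ N := by
    rw [mul_comm, ← Nat.le_div_iff_mul_le hD.bot_lt]
    exact (Nat.le_nthRoot_iff hk).1 le_rfl
  have hNP : N < D * (P + 1) ^ k := by
    rw [mul_comm, ← Nat.div_lt_iff_lt_mul hD.bot_lt]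
    exact Nat.lt_pow_nthRoot_add_one hk _
  calc N ≤ D * (P + P) ^ k := hNP.le.trans (by gcongr)
    _ = D * 2 ^ k * P ^ k := by ring
    _ ≤ D * 2 ^ k * (K * #{n ∈ range (D * P ^ k + 1) | n ∈ A}) := by gcongr; exact hK P hP
    _ ≤ D * 2 ^ k * (K * #{n ∈ range (N + 1) | n ∈ A}) := by gcongr
    _ = D * 2 ^ k * K * #{n ∈ range (N + 1) | n ∈ A} := by ring
    _ ≤ _ := Nat.mul_le_mul_right _ (Nat.le_add_left _ _)

lemma exists_nsmul_range_pow_eq_univ {k : ℕ} (hk : k ≠ 0) :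
    ∃ s : ℕ, s • Set.range (fun x : ℕ => x ^ k) = Set.univ := by
  classical
  obtain ⟨u, hu, K, hK⟩ := exists_pow_le_mul_card_sum_pow hk
  set S := Set.range fun x : ℕ => x ^ k
  have hzero : 0 ∈ u • S := Set.zero_mem_nsmul ⟨0, zero_pow hk⟩
  have hone : 1 ∈ u • S :=
    Set.subset_nsmul (s := S) ⟨0, zero_pow hk⟩ hu ⟨1, one_pow k⟩
  have hsum : ∀ P ≥ 1, P ^ k ≤ K * #{n ∈ range (u * P ^ k + 1) | n ∈ u • S} := fun P hP => by
    refine (hK P hP).trans (Nat.mul_le_mul_left _ (card_le_card ?_))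
    refine image_subset_iff.2 fun x hx => ?_
    simp only [Fintype.mem_piFinset, mem_range_succ_iff] at hx
    refine mem_filter.2 ⟨mem_range_succ_iff.2 ?_, ?_⟩
    · simpa using sum_le_card_nsmul univ (fun i => x i ^ k) (P ^ k) fun i _ =>
        Nat.pow_le_pow_left (hx i) k
    · simpa using Set.finsetSum_mem_finsetSum univ (fun _ => S) (fun i => x i ^ k)
        fun i _ => ⟨x i, rfl⟩
  obtain ⟨h, hh⟩ := exists_nsmul_eq_univ_of_schnirelmannDensity_pos hzero
    (schnirelmannDensity_pos_of_le_mul_card hone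
      (le_mul_card_of_pow_le hk hu hzero hsum))
  exact ⟨u * h, by rw [mul_nsmul, hh]⟩

end SchnirelmannDensity

end Waring

section PositivePowers

open scoped Pointwise

lemma IsRepr.add {m n i j k : ℕ} (hm : IsRepr m i k) (hn : IsRepr n j k) :
    IsRepr (m + n) (i + j) k := by
  obtain ⟨x, hx, rfl⟩ := hm
  obtain ⟨y, hy, rfl⟩ := hn
  exact ⟨Fin.append x y, Fin.addCases (by simpa using hx) (by simpa using hy),
    by simp [Fin.sum_univ_add]⟩

lemma isRepr_mul_pow {a : ℕ} (ha : 0 < a) (j k : ℕ) : IsRepr (j * a ^ k) j k :=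
  ⟨fun _ => a, fun _ => ha, by simp⟩

lemma isRepr_self (j k : ℕ) : IsRepr j j k := by
  simpa using isRepr_mul_pow one_pos j k

lemma exists_isRepr_of_mem_nsmul {k s n : ℕ} (hk : k ≠ 0)
    (hn : n ∈ s • Set.range fun x : ℕ => x ^ k) : ∃ m ≤ s, IsRepr n m k := by
  induction s generalizing n with
  | zero =>
    obtain rfl : n = 0 := by simpa using hn
    exact ⟨0, le_rfl, isRepr_self 0 k⟩
  | succ s ih =>
    rw [succ_nsmul] at hn
    obtain ⟨l, hl, _, ⟨x, rfl⟩, rfl⟩ := hn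
    obtain ⟨m, hm, hr⟩ := ih hl
    obtain rfl | hx := x.eq_zero_or_pos
    · exact ⟨m, by lia, by simpa [hk] using hr⟩
    · exact ⟨m + 1, by lia, hr.add (by simpa using isRepr_mul_pow hx 1 k)⟩

-- `a` of the `M` summands `c ^ k` are each replaced by `c ^ k` ones.
lemma isRepr_mul_pow_add {a c k M : ℕ} (hc : 0 < c) (ha : a ≤ M) :
    IsRepr (M * c ^ k) (M + a * (c ^ k - 1)) k := by
  have hck : 1 ≤ c ^ k := Nat.one_le_pow _ _ hc
  obtain ⟨b, rfl⟩ := Nat.exists_eq_add_of_le ha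
  obtain ⟨d, hd⟩ := Nat.exists_eq_add_of_le hck
  have h := (isRepr_self (a * c ^ k) k).add (isRepr_mul_pow hc b k)
  rw [hd] at h ⊢
  convert h using 1
  · ring
  · rw [Nat.add_sub_cancel_left]
    ring

lemma coprime_mul_pow_sub_one {c m k : ℕ} (hk : k ≠ 0) (hpos : 0 < c * m) :
    m.Coprime ((c * m) ^ k - 1) := by
  refine Nat.Coprime.coprime_dvd_left ((Dvd.intro_left c rfl).trans (dvd_pow_self _ hk)) ?_
  exact (Nat.coprime_self_sub_right (Nat.one_le_pow _ _ hpos)).2 (Nat.coprime_one_right _)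

/-- Replacing one summand `2 ^ k` by ones changes the number of summands by `2 ^ k - 1`, and
replacing one `(2 * (2 ^ k - 1)) ^ k` changes it by a number coprime to that. -/
lemma exists_forall_le_isRepr {k : ℕ} (hk : k ≠ 0) (s : ℕ) :
    ∃ T L : ℕ, ∀ m ≤ s, IsRepr T (L + m) k := by
  set p := 2 ^ k - 1
  set c := 2 * p
  set q := c ^ k - 1
  have hp : 0 < p := Nat.sub_pos_of_lt (Nat.one_lt_two_pow hk)
  have hq : 0 < q := Nat.sub_pos_of_lt (Nat.one_lt_pow hk (by lia))
  set M := p * q + s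
  refine ⟨M * 2 ^ k + M * c ^ k, 2 * M + p * q, fun m hm => ?_⟩
  obtain ⟨a, b, hab⟩ := Nat.exists_add_mul_eq_of_gcd_dvd_of_mul_pred_le p q (p * q + m)
    (by simp [(coprime_mul_pow_sub_one hk (show 0 < c by lia)).gcd_eq_one, q, c])
    ((Nat.mul_le_mul p.pred_le q.pred_le).trans (Nat.le_add_right _ _))
  have ha : a ≤ M := (Nat.le_mul_of_pos_right a hp).trans (by lia)
  have hb : b ≤ M := (Nat.le_mul_of_pos_right b hq).trans (by lia)
  convert (isRepr_mul_pow_add (k := k) two_pos ha).add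
    (isRepr_mul_pow_add (k := k) (show 0 < c by lia) hb) using 1
  lia

end PositivePowers

theorem stmt_2_general (k : ℕ) (hk : k ≠ 0) :
    ∃ J T : ℕ, ∀ j ≥ J, ∀ n ≥ T + j, IsRepr n j k := by
  obtain ⟨s, hs⟩ := Waring.exists_nsmul_range_pow_eq_univ hk
  obtain ⟨T, L, hT⟩ := exists_forall_le_isRepr hk s
  refine ⟨L + s, T, fun j hj n hn => ?_⟩
  obtain ⟨m, hm, hr⟩ : ∃ m ≤ s, IsRepr (n - (T + (j - (L + s)))) m k :=
    exists_isRepr_of_mem_nsmul hk (hs ▸ Set.mem_univ _)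
  have hsum := (hr.add (hT (s - m) (Nat.sub_le s m))).add (isRepr_self (j - (L + s)) k)
  convert hsum using 1 <;> lia

/-- for every `k ≥ 2` there is a positive integer `J` such that for all
`j ≥ J`, the set of positive integers that are not `(j,k)`-representable is finite. -/
theorem stmt_2 (k : ℕ) (hk : 2 ≤ k) :
    ∃ J : ℕ, 0 < J ∧ ∀ j : ℕ, J ≤ j →
      {n : ℕ | 0 < n ∧ ¬ IsRepr n j k}.Finite := by
  obtain ⟨J, T, hJT⟩ := stmt_2_general k (by lia)
  exact ⟨J + 1, J.succ_pos, fun j hj => (Set.finite_lt_nat (T + j)).subset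
    fun n hn => not_le.1 fun hle => hn.2 (hJT j (by lia) n hle)⟩
end

section
/- Let B³ = {1, 2, 3, 4, 5, 6, 8, 9, 10, 11, 12, 13, 15, 16, 17, 18, 19, 20, 22, 23, 24, 25, 27, 29, 30, 31, 32, 34, 36, 37, 38, 39, 41, 43, 44, 45, 46, 48, 50, 51, 53, 55, 57, 58, 60, 62, 64, 65, 67, 69, 71, 72, 74, 76, 79, 81, 83, 86, 88, 90, 93, 95, 97, 100, 102, 107, 109, 114, 116, 121, 123, 128, 135, 142, 149}. Then for every integer j ≥ 14, every integer n with n ≥ j and n − j ∉ B³ is the sum of exactly j positive cubes. -/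
/-- Zenkin's set `B³`. -/
def B3 : Finset ℕ :=
  {1, 2, 3, 4, 5, 6, 8, 9, 10, 11, 12, 13, 15, 16, 17, 18, 19, 20, 22, 23, 24, 25, 27,
   29, 30, 31, 32, 34, 36, 37, 38, 39, 41, 43, 44, 45, 46, 48, 50, 51, 53, 55, 57,
   58, 60, 62, 64, 65, 67, 69, 71, 72, 74, 76, 79, 81, 83, 86, 88, 90, 93, 95, 97,
   100, 102, 107, 109, 114, 116, 121, 123, 128, 135, 142, 149}

/-!
Below `512 ^ 9` the argument is computational: once every integer of a long interval is a sum of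
`s` positive cubes, subtracting the largest possible cube shows that every integer of a much longer
interval is a sum of `s + 1` positive cubes, and six such steps lead from a table
of small sums past `512 ^ 9`.

Above `512 ^ 9` every odd `n` is a sum of ten positive cubes. Since
`(a + x) ^ 3 + (a - x) ^ 3 = 2 * a ^ 3 + 6 * a * x ^ 2`, Lagrange's four-square theorem makes
`8 * a ^ 3 + 6 * a * t` a sum of eight positive cubes whenever `t < a ^ 2`. Take `a = 8 ^ l` of the
order of the cube root of `n`. As cubing permutes the odd residues modulo `6 * a`, there is a cube
`y ^ 3` with `n = 8 * a ^ 3 + y ^ 3 + 6 * a * q`. Since `216 * a = (6 * 2 ^ l) ^ 3` is itself a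
cube, a tenth cube `216 * a * w ^ 3` reduces `q` to `t = q - 36 * w ^ 3 < a ^ 2`. Four cubes chosen
among `1` and `8` take care of the parity of `n`.
-/

open Nat in
theorem exists_pow_modEq_of_coprime_totient {m k r : ℕ} [NeZero m] (hk : (φ m).Coprime k)
    (hr : r.Coprime m) : ∃ y, y ^ k ≡ r [MOD m] := by
  have hcard : (Nat.card (ZMod m)ˣ).Coprime k := by
    rwa [Nat.card_eq_fintype_card, ZMod.card_units_eq_totient]
  obtain ⟨u, hu⟩ := (powCoprime hcard).surjective (ZMod.unitOfCoprime r hr)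
  refine ⟨(u : ZMod m).val, (ZMod.natCast_eq_natCast_iff _ _ _).1 ?_⟩
  simpa using congrArg Units.val hu

theorem exists_pow_modEq_two_pow {k r : ℕ} (hk : Odd k) (hr : Odd r) (K : ℕ) :
    ∃ y, y ^ k ≡ r [MOD 2 ^ K] := by
  refine exists_pow_modEq_of_coprime_totient ?_ (hr.coprime_two_right.pow_right K)
  cases K with
  | zero => simp
  | succ K =>
    rw [Nat.totient_prime_pow_succ Nat.prime_two, Nat.add_one_sub_one, mul_one]
    exact hk.coprime_two_left.pow_left K

theorem cube_modEq_three_self (y : ℕ) : y ^ 3 ≡ y [MOD 3] :=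
  (ZMod.natCast_eq_natCast_iff _ _ _).1 <| by
    rw [Nat.cast_pow, ZMod.pow_card]

theorem exists_cube_modEq_three_mul_two_pow {r K : ℕ} (hr : Odd r) (hK : K ≠ 0) :
    ∃ y, 0 < y ∧ y < 3 * 2 ^ K ∧ y ^ 3 ≡ r [MOD 3 * 2 ^ K] := by
  have hcop : Nat.Coprime 3 (2 ^ K) := Nat.Coprime.pow_right K (by norm_num)
  obtain ⟨z, hz⟩ := exists_pow_modEq_two_pow (by decide : Odd 3) hr K
  obtain ⟨y, hy₃, hy₂⟩ := Nat.chineseRemainder hcop r z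
  have hcube : y ^ 3 ≡ r [MOD 3 * 2 ^ K] :=
    (Nat.modEq_and_modEq_iff_modEq_mul hcop).1
      ⟨(cube_modEq_three_self y).trans hy₃, (hy₂.pow 3).trans hz⟩
  have hmod : (y % (3 * 2 ^ K)) ^ 3 ≡ r [MOD 3 * 2 ^ K] :=
    ((Nat.mod_modEq y _).pow 3).trans hcube
  refine ⟨y % (3 * 2 ^ K), Nat.pos_of_ne_zero fun hzero => ?_, Nat.mod_lt _ (by positivity), hmod⟩
  have htwo : 2 ∣ 3 * 2 ^ K := (dvd_pow_self 2 hK).mul_left 3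
  have : 0 ≡ r [MOD 2] := by simpa [hzero] using hmod.of_dvd htwo
  exact hr.not_two_dvd_nat (Nat.modEq_zero_iff_dvd.1 this.symm)

theorem add_pow_add_add_pow_le {R : Type*} [CommSemiring R] [PartialOrder R]
    [IsOrderedRing R] {x c d : R} (hx : 0 ≤ x) (hc : 0 ≤ c) (hd : 0 ≤ d) (k : ℕ) :
    (x + c) ^ k + (x + d) ^ k ≤ x ^ k + (x + c + d) ^ k := by
  induction k with
  | zero => simp
  | succ k ih =>
    have hcle : (x + c) ^ k ≤ (x + c + d) ^ k :=
      pow_le_pow_left₀ (add_nonneg hx hc) (le_add_of_nonneg_right hd) k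
    have hdle : (x + d) ^ k ≤ (x + c + d) ^ k :=
      pow_le_pow_left₀ (add_nonneg hx hd) (by gcongr; exact le_add_of_nonneg_right hc) k
    calc (x + c) ^ (k + 1) + (x + d) ^ (k + 1)
        = x * ((x + c) ^ k + (x + d) ^ k) + c * (x + c) ^ k + d * (x + d) ^ k := by ring
      _ ≤ x * (x ^ k + (x + c + d) ^ k) + c * (x + c + d) ^ k + d * (x + c + d) ^ k := by gcongr
      _ = x ^ (k + 1) + (x + c + d) ^ (k + 1) := by ring

namespace IsRepr

variable {m n i j k a : ℕ}

theorem self (j k : ℕ) : IsRepr j j k :=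
  ⟨fun _ => 1, fun _ => one_pos, by simp⟩

theorem pow (k : ℕ) (ha : 0 < a) : IsRepr (a ^ k) 1 k :=
  ⟨fun _ => a, fun _ => ha, by simp⟩

theorem add_s13 (hm : IsRepr m i k) (hn : IsRepr n j k) : IsRepr (m + n) (i + j) k := by
  obtain ⟨f, hf, rfl⟩ := hm
  obtain ⟨g, hg, rfl⟩ := hn
  refine ⟨Fin.append f g, fun i => ?_, by simp [Fin.sum_univ_add]⟩
  cases i using Fin.addCases <;> simp [hf, hg]

theorem add_pow (hn : IsRepr n j k) (ha : 0 < a) : IsRepr (n + a ^ k) (j + 1) k :=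
  hn.add_s13 (pow k ha)

/-- Subtracting the largest possible `k`-th power `a ^ k` from `n` leaves a remainder between `L`
and `L + (a + 1) ^ k - a ^ k`. -/
theorem extend_Ico {s L U : ℕ} (A : ℕ) (h : ∀ n ∈ Set.Ico L U, IsRepr n s k) (hk : k ≠ 0)
    (hA : L + (A + 1) ^ k ≤ U + A ^ k) :
    ∀ n ∈ Set.Ico (L + 1) (L + (A + 1) ^ k), IsRepr n (s + 1) k := by
  rintro n ⟨hL, hn⟩
  set a := Nat.nthRoot k (n - L)
  have ha_le : a ^ k ≤ n - L := Nat.pow_nthRoot_le (.inl hk)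
  have hlt : n - L < (a + 1) ^ k := Nat.lt_pow_nthRoot_add_one hk _
  have ha_pos : 0 < a := by
    refine Nat.pos_of_ne_zero fun h0 => ?_
    rw [h0, zero_add, one_pow] at hlt
    omega
  have haA : a < A + 1 :=
    lt_of_pow_lt_pow_left₀ k (A + 1).zero_le (ha_le.trans_lt (by omega))
  have hgap : (a + 1) ^ k + A ^ k ≤ a ^ k + (A + 1) ^ k := by
    obtain ⟨d, rfl⟩ := Nat.exists_eq_add_of_le (Nat.lt_succ_iff.1 haA)
    simpa only [add_right_comm a 1 d] using
      add_pow_add_add_pow_le a.zero_le zero_le_one d.zero_le k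
  have hsub := (h (n - a ^ k) ⟨by omega, by omega⟩).add_pow ha_pos
  rwa [Nat.sub_add_cancel (by omega)] at hsub

theorem two_mul_cube_add {x : ℕ} (hx : x < a) : IsRepr (2 * a ^ 3 + 6 * a * x ^ 2) 2 3 := by
  obtain ⟨d, hd, rfl⟩ := exists_pos_add_of_lt' hx
  convert (pow 3 hd).add_pow (show 0 < x + d + x by omega) using 1
  ring

theorem eight_mul_cube_add {t : ℕ} (ht : t < a ^ 2) : IsRepr (8 * a ^ 3 + 6 * a * t) 8 3 := by
  obtain ⟨x, y, z, w, rfl⟩ := Nat.sum_four_squares t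
  have hpair : ∀ u, u ^ 2 < a ^ 2 → IsRepr (2 * a ^ 3 + 6 * a * u ^ 2) 2 3 := fun u hu =>
    two_mul_cube_add (lt_of_pow_lt_pow_left₀ 2 a.zero_le hu)
  convert ((hpair x (by omega)).add_s13 (hpair y (by omega))).add_s13
    ((hpair z (by omega)).add_s13 (hpair w (by omega))) using 1
  ring

end IsRepr

/-- The bitwise union of the left shifts of `R` by `1 ^ k, …, b ^ k`: if the binary digits of `R`
encode a set of integers, those of `shiftUnion k R b` encode its sumset with these powers. -/
def shiftUnion (k R : ℕ) : ℕ → ℕ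
  | 0 => 0
  | b + 1 => shiftUnion k R b ||| R <<< (b + 1) ^ k

/-- The set of sums of `s` positive `k`-th powers of integers at most `b`, encoded by the binary
digits of a natural number so that membership is cheap to evaluate. -/
def powSumMask (k b : ℕ) : ℕ → ℕ
  | 0 => 1
  | s + 1 => shiftUnion k (powSumMask k b s) b

theorem exists_testBit_of_testBit_shiftUnion {k R b n : ℕ} (h : (shiftUnion k R b).testBit n) :
    ∃ a, 0 < a ∧ a ^ k ≤ n ∧ R.testBit (n - a ^ k) := by
  induction b with
  | zero => simp [shiftUnion] at h
  | succ b ih =>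
    simp only [shiftUnion, Nat.testBit_or, Nat.testBit_shiftLeft, Bool.or_eq_true,
      Bool.and_eq_true, decide_eq_true_eq] at h
    rcases h with hsmaller | ⟨hle, hbit⟩
    · exact ih hsmaller
    · exact ⟨b + 1, b.succ_pos, hle, hbit⟩

theorem isRepr_of_testBit_powSumMask {k b s n : ℕ} (h : (powSumMask k b s).testBit n) :
    IsRepr n s k := by
  induction s generalizing n with
  | zero =>
    obtain rfl : n = 0 := Nat.testBit_one_eq_true_iff_self_eq_zero.1 h
    exact IsRepr.self 0 k
  | succ s ih =>
    obtain ⟨a, ha, hle, hbit⟩ := exists_testBit_of_testBit_shiftUnion h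
    simpa only [Nat.sub_add_cancel hle] using (ih hbit).add_pow ha

theorem isRepr_of_powSumMask_shiftRight_mod {k b s L d : ℕ}
    (h : (powSumMask k b s >>> L) % 2 ^ d = 2 ^ d - 1) : ∀ n ∈ Set.Ico L (L + d), IsRepr n s k := by
  rintro n ⟨hL, hn⟩
  obtain ⟨i, rfl⟩ := Nat.exists_eq_add_of_le hL
  have hi : i < d := by omega
  have hbit : ((powSumMask k b s >>> L) % 2 ^ d).testBit i := by
    simpa only [h, Nat.testBit_two_pow_sub_one, decide_eq_true_eq]
  rw [Nat.testBit_mod_two_pow, Nat.testBit_shiftRight, Bool.and_eq_true] at hbit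
  exact isRepr_of_testBit_powSumMask hbit.2

theorem isRepr_eight_of_mem_Ico : ∀ n ∈ Set.Ico 621 4717, IsRepr n 8 3 :=
  isRepr_of_powSumMask_shiftRight_mod (b := 16) (d := 4096) (by decide +kernel)

theorem isRepr_fourteen_of_notMem_B3_of_lt {m : ℕ} (h : m ∉ B3) (hm : m < 613) :
    IsRepr (m + 14) 14 3 := by
  rcases lt_or_ge m 150 with hlt | hge
  · have hbits : ∀ m < 150, m ∉ B3 → (powSumMask 3 16 14).testBit (m + 14) := by decide +kernel
    exact isRepr_of_testBit_powSumMask (hbits m hlt h)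
  · have hblock : (powSumMask 3 16 14 >>> 164) % 2 ^ 463 = 2 ^ 463 - 1 := by decide +kernel
    exact isRepr_of_powSumMask_shiftRight_mod hblock _ ⟨by omega, by omega⟩

theorem isRepr_fourteen_of_mem_Ico :
    ∀ n ∈ Set.Ico 627 (512 ^ 9 + 14), IsRepr n 14 3 := by
  have h₉ := IsRepr.extend_Ico 36 isRepr_eight_of_mem_Ico three_ne_zero (by norm_num)
  have h₁₀ := IsRepr.extend_Ico 128 h₉ three_ne_zero (by norm_num)
  have h₁₁ := IsRepr.extend_Ico 800 h₁₀ three_ne_zero (by norm_num)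
  have h₁₂ := IsRepr.extend_Ico 13000 h₁₁ three_ne_zero (by norm_num)
  have h₁₃ := IsRepr.extend_Ico 850000 h₁₂ three_ne_zero (by norm_num)
  have h₁₄ := IsRepr.extend_Ico 450000000 h₁₃ three_ne_zero (by norm_num)
  exact fun n hn => h₁₄ n (Set.Ico_subset_Ico_right (by norm_num) hn)

theorem exists_eq_mul_cube_add_lt {c q B : ℕ} (hc : 0 < c) (hcq : c ≤ q)
    (hB : 343 * c * q ^ 2 ≤ B ^ 3) : ∃ w t, 0 < w ∧ t < B ∧ q = c * w ^ 3 + t := by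
  set w := Nat.nthRoot 3 (q / c)
  have hle : c * w ^ 3 ≤ q :=
    mul_comm c _ ▸ (Nat.le_div_iff_mul_le hc).1 (Nat.pow_nthRoot_le (.inl three_ne_zero))
  have hlt : q < c * (w + 1) ^ 3 :=
    mul_comm c _ ▸ (Nat.div_lt_iff_lt_mul hc).1 (Nat.lt_pow_nthRoot_add_one three_ne_zero _)
  have hw : 0 < w := by
    refine Nat.pos_of_ne_zero fun h0 => hlt.not_ge ?_
    simpa only [h0, zero_add, one_pow, mul_one] using hcq
  refine ⟨w, q - c * w ^ 3, hw, ?_, by omega⟩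
  calc q - c * w ^ 3 < c * (3 * w ^ 2 + 3 * w + 1) := by
        have : c * (w + 1) ^ 3 = c * w ^ 3 + c * (3 * w ^ 2 + 3 * w + 1) := by ring
        omega
    _ ≤ c * (7 * w ^ 2) := by gcongr; nlinarith
    _ ≤ B := by
        refine le_of_pow_le_pow_left₀ three_ne_zero B.zero_le ?_
        calc (c * (7 * w ^ 2)) ^ 3 = 343 * c * (c * w ^ 3) ^ 2 := by ring
          _ ≤ 343 * c * q ^ 2 := by gcongr
          _ ≤ B ^ 3 := hB

theorem exists_eq_cube_add_six_mul {n a e : ℕ} (ha : a = 2 ^ e) (hn : Odd n)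
    (han : 224 * a ^ 3 ≤ n) :
    ∃ y q, 0 < y ∧ y < 6 * a ∧ n = 8 * a ^ 3 + y ^ 3 + 6 * a * q := by
  have hmod : 3 * 2 ^ (e + 1) = 6 * a := by
    rw [ha]
    ring
  have hodd : Odd (n - 8 * a ^ 3) :=
    Nat.Odd.sub_even (by omega) hn ⟨4 * a ^ 3, by ring⟩
  obtain ⟨y, hy, hlt, hcube⟩ := exists_cube_modEq_three_mul_two_pow hodd e.add_one_ne_zero
  rw [hmod] at hlt hcube
  have hy_le : y ^ 3 ≤ 216 * a ^ 3 := by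
    linarith [Nat.pow_le_pow_left hlt.le 3, mul_pow 6 a 3]
  obtain ⟨q, hq⟩ := (Nat.modEq_iff_dvd' (by omega)).1 hcube
  exact ⟨y, q, hy, hlt, by omega⟩

theorem isRepr_ten_of_odd_of_mem_Ico {n a l : ℕ} (ha : a = 8 ^ l) (ha_ge : 8 ^ 8 ≤ a) (hn : Odd n)
    (hna : n ∈ Set.Ico (512 * a ^ 3) (512 ^ 2 * a ^ 3)) : IsRepr n 10 3 := by
  obtain ⟨hlower, hupper⟩ := hna
  have ha_two_pow : a = 2 ^ (3 * l) := by rw [ha, pow_mul]; norm_num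
  obtain ⟨y, q, hy, hya, hq⟩ := exists_eq_cube_add_six_mul ha_two_pow hn (by omega)
  have hy_le : y ^ 3 ≤ 216 * a ^ 3 := by
    linarith [Nat.pow_le_pow_left hya.le 3, mul_pow 6 a 3]
  have hq_ge : 36 ≤ q := by
    refine le_of_mul_le_mul_left (a := 6 * a) ?_ (by omega)
    have : a ≤ a ^ 3 := Nat.le_self_pow three_ne_zero a
    omega
  have hq_le : 6 * q ≤ 512 ^ 2 * a ^ 2 := by
    refine le_of_mul_le_mul_left (a := a) ?_ (by omega)
    calc a * (6 * q) = 6 * a * q := by ring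
      _ ≤ 512 ^ 2 * a ^ 3 := by omega
      _ = a * (512 ^ 2 * a ^ 2) := by ring
  have hq_sq : 343 * 36 * q ^ 2 ≤ (a ^ 2) ^ 3 := by
    calc 343 * 36 * q ^ 2 = 343 * (6 * q) ^ 2 := by ring
      _ ≤ 343 * (512 ^ 2 * a ^ 2) ^ 2 := by gcongr
      _ = 343 * 2 ^ 36 * a ^ 4 := by ring
      _ ≤ (8 ^ 8) ^ 2 * a ^ 4 := by gcongr ?_ * _; norm_num
      _ ≤ a ^ 2 * a ^ 4 := by gcongr
      _ = (a ^ 2) ^ 3 := by ring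
  obtain ⟨w, t, hw, ht, rfl⟩ := exists_eq_mul_cube_add_lt (by norm_num) hq_ge hq_sq
  have hw_cube : (6 * 2 ^ l * w) ^ 3 = 216 * a * w ^ 3 := by
    rw [ha_two_pow]
    ring
  convert ((IsRepr.eight_mul_cube_add ht).add_pow hy).add_pow
    (show 0 < 6 * 2 ^ l * w by positivity) using 1
  rw [hq, hw_cube]
  ring

theorem isRepr_ten_of_odd {n : ℕ} (hn : Odd n) (hlarge : 512 ^ 9 ≤ n) : IsRepr n 10 3 := by
  have hlog : 9 ≤ Nat.log 512 n := Nat.le_log_of_pow_le (by norm_num) hlarge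
  obtain ⟨l, hl⟩ := Nat.exists_eq_add_of_le' (show 1 ≤ Nat.log 512 n by omega)
  have hcube : (8 ^ l) ^ 3 = 512 ^ l := by rw [pow_right_comm]; norm_num
  refine isRepr_ten_of_odd_of_mem_Ico (l := l) rfl (Nat.pow_le_pow_right (by norm_num) (by omega))
    hn ⟨?_, ?_⟩
  · calc 512 * (8 ^ l) ^ 3 = 512 ^ Nat.log 512 n := by rw [hcube, hl, pow_succ']
      _ ≤ n := Nat.pow_log_le_self 512 (by omega)
  · calc n < 512 ^ (Nat.log 512 n + 1) := Nat.lt_pow_succ_log_self (by norm_num) n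
      _ = 512 ^ 2 * (8 ^ l) ^ 3 := by rw [hcube, hl]; ring

theorem isRepr_fourteen_of_le {n : ℕ} (hn : 512 ^ 9 + 11 ≤ n) : IsRepr n 14 3 := by
  rcases Nat.even_or_odd n with heven | hodd
  · have hten : IsRepr (n - 11) 10 3 :=
      isRepr_ten_of_odd (Nat.Even.sub_odd (by omega) heven (by decide)) (by omega)
    have hfour : IsRepr 11 4 3 := (IsRepr.self 3 3).add_pow two_pos
    simpa only [Nat.sub_add_cancel (show 11 ≤ n by omega)] using hten.add_s13 hfour
  · have hten : IsRepr (n - 4) 10 3 :=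
      isRepr_ten_of_odd (Nat.Odd.sub_even (by omega) hodd (by decide)) (by omega)
    simpa only [Nat.sub_add_cancel (show 4 ≤ n by omega)] using hten.add_s13 (IsRepr.self 4 3)

theorem isRepr_fourteen_of_notMem_B3 {m : ℕ} (h : m ∉ B3) : IsRepr (m + 14) 14 3 := by
  rcases lt_or_ge m 613 with hsmall | hmedium
  · exact isRepr_fourteen_of_notMem_B3_of_lt h hsmall
  rcases lt_or_ge m (512 ^ 9) with hlt | hlarge
  · exact isRepr_fourteen_of_mem_Ico _ ⟨by omega, by omega⟩
  · exact isRepr_fourteen_of_le (by omega)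

/-- for every `j ≥ 14`, every integer `n ≥ j` with `n - j ∉ B³` is the
sum of exactly `j` positive cubes. -/
theorem stmt_13 :
    ∀ j : ℕ, 14 ≤ j → ∀ n : ℕ, j ≤ n → n - j ∉ B3 → IsRepr n j 3 := by
  intro j hj n hn h
  obtain ⟨t, rfl⟩ := Nat.exists_eq_add_of_le hj
  simpa only [add_assoc, Nat.sub_add_cancel hn] using
    (isRepr_fourteen_of_notMem_B3 h).add_s13 (IsRepr.self t 3)
end
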